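/- Fix ρ ∈ (0,1), ν ∈ ℝ, and assume (ρ, ν) ≠ (1/√2, π/2 + nπ) for every integer n. Then the quantum walker converges in distribution: for every real number x, lim_{t→∞} Σ_{y ∈ ℤ, y ≤ x·t} P(X_t = y) = ∫_{−∞}^{x} f(y) dy, where f(y) = (√(η₊(y)) + √(η₋(y))) · γ(y) / (2π(1−y²)√(ξ(y))) for y ∈ (−h*, h*) and f(y) = 0 otherwise. -/

import Mathlib

open Real Filter Topology MeasureTheory

noncomputable section

/-- `ρ₀ = √(1-ρ²)`. -/
def rz (ρ : ℝ) : ℝ := Real.sqrt (1 - ρ ^ 2)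

/-- `α₀ = ρ e^{iν}`. -/
def az (ρ ν : ℝ) : ℂ := (ρ : ℂ) * Complex.exp (Complex.I * (ν : ℂ))

/-- `B₋`. -/
def Bm (ρ ν : ℝ) : Matrix (Fin 2) (Fin 2) ℂ :=
  !![0, 0; ((rz ρ) ^ 2 : ℝ), ((rz ρ : ℝ) : ℂ) * (starRingEnd ℂ) (az ρ ν)]

/-- `B₀`. -/
def B0 (ρ ν : ℝ) : Matrix (Fin 2) (Fin 2) ℂ :=
  !![-(az ρ ν) * ((rz ρ : ℝ) : ℂ), -((ρ ^ 2 : ℝ) : ℂ);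
      -((ρ ^ 2 : ℝ) : ℂ), ((rz ρ : ℝ) : ℂ) * (starRingEnd ℂ) (az ρ ν)]

/-- `B₊`. -/
def Bp (ρ ν : ℝ) : Matrix (Fin 2) (Fin 2) ℂ :=
  !![-(az ρ ν) * ((rz ρ : ℝ) : ℂ), (((rz ρ) ^ 2 : ℝ) : ℂ); 0, 0]

/-- The quantum walk `Ψ_t : ℤ → ℂ²`. -/
def qwalk (ρ ν : ℝ) (α β : ℂ) : ℕ → ℤ → Fin 2 → ℂ
  | 0, x => if x = 0 then ![α, β] else 0
  | t + 1, x =>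
      (Bm ρ ν).mulVec (qwalk ρ ν α β t (x + 1)) + (B0 ρ ν).mulVec (qwalk ρ ν α β t x)
        + (Bp ρ ν).mulVec (qwalk ρ ν α β t (x - 1))

/-- `P(X_t = x) = ‖Ψ_t(x)‖²`. -/
def qprob (ρ ν : ℝ) (α β : ℂ) (t : ℕ) (x : ℤ) : ℝ :=
  ‖qwalk ρ ν α β t x 0‖ ^ 2 + ‖qwalk ρ ν α β t x 1‖ ^ 2

/-- `ξ(x) = (ρ²−x²)(ρ₀²−x²) − ρ²ρ₀²(cos²ν)x²`. -/
def xif (ρ ν x : ℝ) : ℝ :=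
  (ρ ^ 2 - x ^ 2) * ((rz ρ) ^ 2 - x ^ 2) - ρ ^ 2 * (rz ρ) ^ 2 * (Real.cos ν) ^ 2 * x ^ 2

/-- `η₊(x)`. -/
def etaP (ρ ν x : ℝ) : ℝ :=
  1 - ρ ^ 2 * (rz ρ) ^ 2 * (1 + (Real.sin ν) ^ 2)
    - (1 - ρ ^ 2 * (rz ρ) ^ 2 * (Real.cos ν) ^ 2) * x ^ 2
    + 2 * ρ * rz ρ * Real.sin ν * Real.sqrt (xif ρ ν x)

/-- `η₋(x)`. -/
def etaM (ρ ν x : ℝ) : ℝ :=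
  1 - ρ ^ 2 * (rz ρ) ^ 2 * (1 + (Real.sin ν) ^ 2)
    - (1 - ρ ^ 2 * (rz ρ) ^ 2 * (Real.cos ν) ^ 2) * x ^ 2
    - 2 * ρ * rz ρ * Real.sin ν * Real.sqrt (xif ρ ν x)

/-- `γ(x)`. -/
def gam (ρ ν : ℝ) (α β : ℂ) (x : ℝ) : ℝ :=
  1 + (‖α‖ ^ 2 - ‖β‖ ^ 2
    - (2 * rz ρ / ρ) * ((α * (starRingEnd ℂ) β).re * Real.cos ν
        - (α * (starRingEnd ℂ) β).im * Real.sin ν)) * x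

/-- `h*`. -/
def hstar (ρ ν : ℝ) : ℝ :=
  (1 / 2) * (Real.sqrt ((1 + ρ * rz ρ) ^ 2 - ρ ^ 2 * (rz ρ) ^ 2 * (Real.sin ν) ^ 2)
    - Real.sqrt ((1 - ρ * rz ρ) ^ 2 - ρ ^ 2 * (rz ρ) ^ 2 * (Real.sin ν) ^ 2))

/-- The limit density function `f`. -/
def dens (ρ ν : ℝ) (α β : ℂ) (y : ℝ) : ℝ :=
  if y ∈ Set.Ioo (-(hstar ρ ν)) (hstar ρ ν) then
    (Real.sqrt (etaP ρ ν y) + Real.sqrt (etaM ρ ν y)) * gam ρ ν α β y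
      / (2 * π * (1 - y ^ 2) * Real.sqrt (xif ρ ν y))
  else 0

section Part1

/-- velocity -/
def vf (q S φ : ℝ) : ℝ := q * cos φ / √(1 - q ^ 2 * (sin φ - S) ^ 2)
def xi (q S y : ℝ) : ℝ := y ^ 4 - (1 + q ^ 2 * (1 - S ^ 2)) * y ^ 2 + q ^ 2
def sg (q S e y : ℝ) : ℝ := (-(y ^ 2 * q * S) + e * √(xi q S y)) / (q * (1 - y ^ 2))
def cc (q S e y : ℝ) : ℝ := √(1 - q ^ 2 * (sg q S e y - S) ^ 2)
def HH (q S y : ℝ) : ℝ := arcsin (sg q S 1 y) - arcsin (sg q S (-1) y)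
def GG (q S y : ℝ) : ℝ := (cc q S 1 y + cc q S (-1) y) / √(xi q S y)

structure Par (q S h : ℝ) : Prop where
  q0 : 0 < q
  q1 : q ≤ 1 / 2
  S0 : -1 ≤ S
  S1 : S ≤ 1
  g0 : q * (1 + S) < 1
  g1 : q * (1 - S) < 1
  h0 : 0 < h
  hq : h ^ 2 < q
  hx : ∀ y, h ^ 2 * xi q S y = (y ^ 2 - h ^ 2) * (h ^ 2 * y ^ 2 - q ^ 2)

variable {q S h : ℝ}

lemma Par.gap (P : Par q S h) {σ : ℝ} (h0 : -1 ≤ σ) (h1 : σ ≤ 1) :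
    0 < 1 - q ^ 2 * (σ - S) ^ 2 := by
  have a1 : q * (σ - S) < 1 := by nlinarith [P.q0, P.g0, P.g1]
  have a2 : -1 < q * (σ - S) := by nlinarith [P.q0, P.g0, P.g1]
  nlinarith

lemma key (q S y σ : ℝ) : (1 - y ^ 2) * (q ^ 2 * (1 - σ ^ 2) - y ^ 2 * (1 - q ^ 2 * (σ - S) ^ 2))
    = xi q S y - (q * (1 - y ^ 2) * σ + y ^ 2 * q * S) ^ 2 := by
  unfold xi; ring

lemma Par.gapφ (P : Par q S h) (φ : ℝ) : 0 < 1 - q ^ 2 * (sin φ - S) ^ 2 :=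
  P.gap (neg_one_le_sin φ) (sin_le_one φ)

lemma vf_sq (P : Par q S h) (φ : ℝ) :
    (vf q S φ) ^ 2 * (1 - q ^ 2 * (sin φ - S) ^ 2) = q ^ 2 * (1 - sin φ ^ 2) := by
  have := P.gapφ φ
  unfold vf
  rw [div_pow, sq_sqrt this.le, mul_pow, cos_sq']
  field_simp

lemma vf_sq_le (P : Par q S h) (φ : ℝ) : (vf q S φ) ^ 2 ≤ q := by
  have h1 := P.gapφ φ
  have h2 := vf_sq P φ
  have hs0 := neg_one_le_sin φ
  have hs1 := sin_le_one φ
  set σ := sin φ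
  have q0 := P.q0
  have q1 := P.q1
  have S0 := P.S0
  have S1 := P.S1
  have key1 : q * (1 - σ ^ 2) ≤ 1 - q ^ 2 * (σ - S) ^ 2 := by
    have a : (σ - S) ^ 2 ≤ (|σ| + 1) ^ 2 := by
      apply sq_le_sq.2
      have : |S| ≤ 1 := abs_le.2 ⟨S0, S1⟩
      rw [abs_of_nonneg (by positivity : 0 ≤ |σ| + 1)]
      exact (abs_sub σ S).trans (by linarith)
    have b : q * (1 - |σ| ^ 2) ≤ 1 - q ^ 2 * (|σ| + 1) ^ 2 := by
      nlinarith [mul_nonneg q0.le (sq_nonneg ((1 - q) * |σ| - q))]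
    rw [sq_abs] at b
    nlinarith [mul_le_mul_of_nonneg_left a (sq_nonneg q)]
  by_contra! hc
  nlinarith

lemma xi_pos (P : Par q S h) {y : ℝ} (h0 : 0 ≤ y) (h1 : y < h) : 0 < xi q S y := by
  have hx := P.hx y
  have hh := P.h0
  have hq := P.hq
  have q0 := P.q0
  have e1 : y ^ 2 < h ^ 2 := by nlinarith
  have e2 : h ^ 2 * y ^ 2 < q ^ 2 := by nlinarith [sq_nonneg y]
  have : 0 < h ^ 2 * xi q S y := by rw [hx]; nlinarith
  exact pos_of_mul_pos_right this (by positivity)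

lemma xi_h (P : Par q S h) : xi q S h = 0 := by
  have hx := P.hx h
  have hh := P.h0
  have : h ^ 2 * xi q S h = 0 := by rw [hx]; ring
  rcases mul_eq_zero.1 this with h' | h'
  · exact absurd h' (by positivity)
  · exact h'

lemma vf_le (P : Par q S h) (φ : ℝ) : vf q S φ ≤ h := by
  by_contra! hc
  have hh := P.h0
  have hq := P.hq
  have q0 := P.q0
  have a := vf_sq_le P φ
  have b := key q S (vf q S φ) (sin φ)
  rw [vf_sq P φ] at b
  have c := P.hx (vf q S φ)
  set w := vf q S φ
  have e1 : h ^ 2 < w ^ 2 := by nlinarith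
  have e2 : h ^ 2 * w ^ 2 < q ^ 2 := by nlinarith [sq_nonneg h]
  have : h ^ 2 * xi q S w < 0 := by rw [c]; nlinarith
  have : 0 ≤ xi q S w := by nlinarith [sq_nonneg (q * (1 - w ^ 2) * sin φ + w ^ 2 * q * S)]
  nlinarith [sq_nonneg h]

lemma ysq (P : Par q S h) {y : ℝ} (h0 : 0 ≤ y) (h1 : y ≤ h) : y ^ 2 < 1 / 2 := by
  have hq := P.hq
  have q1 := P.q1
  nlinarith

lemma vf_ge_iff (P : Par q S h) {y φ : ℝ} (h0 : 0 < y) (h1 : y ≤ h)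
    (hφ : φ ∈ Set.Ioo (-(π / 2)) (π / 2)) :
    y ≤ vf q S φ ↔ φ ∈ Set.Icc (arcsin (sg q S (-1) y)) (arcsin (sg q S 1 y)) := by
  have hy := ysq P h0.le h1
  have q0 := P.q0
  have hc := cos_pos_of_mem_Ioo hφ
  have hg := P.gapφ φ
  have hv : 0 ≤ vf q S φ := by unfold vf; positivity
  rw [Set.mem_Icc, Real.arcsin_le_iff_le_sin' ⟨hφ.1.le, hφ.2⟩,
    Real.le_arcsin_iff_sin_le' ⟨hφ.1, hφ.2.le⟩]
  have hd : 0 < q * (1 - y ^ 2) := by nlinarith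
  unfold sg
  rw [div_le_iff₀ hd, le_div_iff₀ hd]
  have hxi : 0 ≤ xi q S y := by
    rcases h1.lt_or_eq with h1 | h1
    · exact (xi_pos P h0.le h1).le
    · rw [h1, xi_h P]
  have e1 : y ≤ vf q S φ ↔ (q * (1 - y ^ 2) * sin φ + y ^ 2 * q * S) ^ 2 ≤ xi q S y := by
    rw [← abs_of_pos h0, ← abs_of_nonneg hv, ← sq_le_sq, abs_of_pos h0]
    have k := key q S y (sin φ)
    rw [← vf_sq P φ] at k
    have k2 : (1 - y ^ 2) * (1 - q ^ 2 * (sin φ - S) ^ 2) * ((vf q S φ) ^ 2 - y ^ 2)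
      = xi q S y - (q * (1 - y ^ 2) * sin φ + y ^ 2 * q * S) ^ 2 := by rw [← k]; ring
    have k3 : 0 < (1 - y ^ 2) * (1 - q ^ 2 * (sin φ - S) ^ 2) := mul_pos (by linarith) hg
    constructor
    · intro h
      nlinarith
    · intro h
      by_contra! h'
      nlinarith
  rw [e1, Real.sq_le hxi]
  constructor <;> rintro ⟨a, b⟩ <;> constructor <;> linarith

lemma sqrt_lt (P : Par q S h) {y e : ℝ} (he : e = 1 ∨ e = -1) (h0 : 0 < y) (h1 : y ≤ h) :
    √(xi q S y) < q * (1 - y ^ 2) + e * (y ^ 2 * q * S) := by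
  have hy := ysq P h0.le h1
  have q0 := P.q0
  have S0 := P.S0
  have S1 := P.S1
  have hS : 0 < q * (1 - y ^ 2) + e * (y ^ 2 * q * S) := by
    have : 0 < (1 - y ^ 2) + e * (y ^ 2 * S) := by
      rcases he with rfl | rfl <;> nlinarith [sq_nonneg y]
    nlinarith
  rw [Real.sqrt_lt' hS]
  have k := key q S y e
  have he2 : e ^ 2 = 1 := by rcases he with rfl | rfl <;> norm_num
  have hg := P.gap (σ := e) (by rcases he with rfl | rfl <;> norm_num)
    (by rcases he with rfl | rfl <;> norm_num)
  rw [he2] at k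
  have : (q * (1 - y ^ 2) + e * (y ^ 2 * q * S)) ^ 2 = (q * (1 - y ^ 2) * e + y ^ 2 * q * S) ^ 2 := by
    linear_combination ((y ^ 2 * q * S)^2 - (q * (1 - y ^ 2))^2) * he2
  rw [this]
  have : 0 < (1 - y ^ 2) * (y ^ 2 * (1 - q ^ 2 * (e - S) ^ 2)) := by
    have : 0 < 1 - y ^ 2 := by linarith
    positivity
  nlinarith

lemma sg_mem (P : Par q S h) {y e : ℝ} (he : e = 1 ∨ e = -1) (h0 : 0 < y) (h1 : y ≤ h) :
    -1 < sg q S e y ∧ sg q S e y < 1 := by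
  have hy := ysq P h0.le h1
  have q0 := P.q0
  have hd : 0 < q * (1 - y ^ 2) := by nlinarith
  have a := sqrt_lt P (Or.inl rfl) h0 h1
  have b := sqrt_lt P (Or.inr rfl) h0 h1
  have c := Real.sqrt_nonneg (xi q S y)
  unfold sg
  rw [div_lt_iff₀ hd, lt_div_iff₀ hd]
  rcases he with rfl | rfl <;> constructor <;> nlinarith

lemma sg_deriv (P : Par q S h) {y e : ℝ} (he : e = 1 ∨ e = -1) (h0 : 0 < y) (h1 : y < h) :
    HasDerivAt (fun y => arcsin (sg q S e y)) (-e * (cc q S e y / √(xi q S y))) y := by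
  have hy := ysq P h0.le h1.le
  have q0 := P.q0
  have hd : 0 < q * (1 - y ^ 2) := by nlinarith
  obtain ⟨m1, m2⟩ := sg_mem P he h0 h1.le
  have hxi := xi_pos P h0.le h1
  have he2 : e ^ 2 = 1 := by rcases he with rfl | rfl <;> norm_num
  have hxd : HasDerivAt (xi q S) (4 * y ^ 3 - (1 + q ^ 2 * (1 - S ^ 2)) * (2 * y)) y := by
    unfold xi
    refine HasDerivAt.congr_deriv (((hasDerivAt_pow 4 y).sub ((hasDerivAt_pow 2 y).const_mul
      (1 + q ^ 2 * (1 - S ^ 2)))).add_const (q ^ 2)) ?_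
    norm_num
  have hsq := hxd.sqrt hxi.ne'
  have hnum : HasDerivAt (fun y => -(y ^ 2 * q * S) + e * √(xi q S y))
      (-(2 * y * q * S) + e * ((4 * y ^ 3 - (1 + q ^ 2 * (1 - S ^ 2)) * (2 * y)) / (2 * √(xi q S y)))) y := by
    refine HasDerivAt.congr_deriv ((((hasDerivAt_pow 2 y).mul_const q).mul_const S).neg.add
      (hsq.const_mul e)) ?_
    norm_num
  have hden : HasDerivAt (fun y => q * (1 - y ^ 2)) (q * (-(2 * y))) y := by
    refine HasDerivAt.congr_deriv (((hasDerivAt_pow 2 y).const_sub 1).const_mul q) ?_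
    norm_num
  have hs := hnum.div hden hd.ne'
  have hgap := P.gap m1.le m2.le
  have kk := key q S y (sg q S e y)
  have r2 := sq_sqrt hxi.le
  have rp := Real.sqrt_pos.2 hxi
  set r := √(xi q S y) with hr
  have hsr : q * (1 - y ^ 2) * sg q S e y + y ^ 2 * q * S = e * r := by
    unfold sg; rw [← hr, mul_div_cancel₀ _ hd.ne']; ring
  have hz : q ^ 2 * (1 - (sg q S e y) ^ 2) = y ^ 2 * (1 - q ^ 2 * (sg q S e y - S) ^ 2) := by
    rw [hsr, mul_pow, he2, r2] at kk
    have : 1 - y ^ 2 ≠ 0 := by nlinarith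
    have := mul_left_cancel₀ this (kk.trans (b := xi q S y - 1 * xi q S y) (c := (1 - y ^ 2) * 0) (by ring))
    linarith
  have hs2 : HasDerivAt (sg q S e) (-e * (y * (1 - q ^ 2 * (sg q S e y - S) ^ 2) / (q * r))) y := by
    refine HasDerivAt.congr_deriv (f := sg q S e) hs ?_
    have hse : sg q S e y = (-(y ^ 2 * q * S) + e * r) / (q * (1 - y ^ 2)) := rfl
    have hpol : r ^ 2 = y ^ 4 - (1 + q ^ 2 * (1 - S ^ 2)) * y ^ 2 + q ^ 2 := r2
    rw [hse]
    have hy1 : 1 - y ^ 2 ≠ 0 := by nlinarith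
    field_simp
    rcases he with rfl | rfl
    · linear_combination 2 * hpol
    · linear_combination (-2) * hpol
  have := (hasDerivAt_arcsin m1.ne' m2.ne).comp y hs2
  refine HasDerivAt.congr_deriv (f := fun y => arcsin (sg q S e y)) this ?_
  unfold cc
  have hz2 : √(1 - sg q S e y ^ 2) = y / q * √(1 - q ^ 2 * (sg q S e y - S) ^ 2) := by
    rw [← Real.sqrt_sq (show 0 ≤ y / q by positivity), ← Real.sqrt_mul (by positivity)]
    congr 1
    field_simp
    linarith
  rw [hz2]
  have := sq_sqrt hgap.le
  have hp := Real.sqrt_pos.2 hgap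
  rw [← this]
  set z := √(1 - q ^ 2 * (sg q S e y - S) ^ 2)
  rw [Real.sqrt_sq hp.le]
  field_simp

lemma sg_cont (P : Par q S h) (e : ℝ) : ContinuousOn (fun y => arcsin (sg q S e y)) (Set.Icc 0 h) := by
  refine Real.continuous_arcsin.comp_continuousOn ?_
  unfold sg xi
  refine ContinuousOn.div (by fun_prop) (by fun_prop) ?_
  intro y hy
  have := ysq P hy.1 hy.2
  have := P.q0
  have : 0 < q * (1 - y ^ 2) := by nlinarith
  exact this.ne'

lemma GG_nonneg (q S y : ℝ) : 0 ≤ GG q S y := by unfold GG cc; positivity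

lemma GG_meas (q S : ℝ) : Measurable (GG q S) := by
  unfold GG cc sg xi
  fun_prop

lemma HH_deriv (P : Par q S h) {y : ℝ} (h0 : 0 < y) (h1 : y < h) :
    HasDerivAt (fun y => -HH q S y) (GG q S y) y := by
  have := ((sg_deriv P (Or.inl rfl) h0 h1).sub (sg_deriv P (Or.inr rfl) h0 h1)).neg
  refine HasDerivAt.congr_deriv this ?_
  unfold GG
  ring

lemma HH_cont (P : Par q S h) : ContinuousOn (fun y => -HH q S y) (Set.Icc 0 h) :=
  ((sg_cont P 1).sub (sg_cont P (-1))).neg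

lemma HH_h (P : Par q S h) : HH q S h = 0 := by
  unfold HH sg
  rw [xi_h P]
  simp

lemma HH_zero (P : Par q S h) : HH q S 0 = π := by
  have := P.q0
  unfold HH sg xi
  simp [Real.sqrt_sq this.le, this.ne']

lemma GG_int (P : Par q S h) : IntegrableOn (GG q S) (Set.Ioc 0 h) :=
  intervalIntegral.integrableOn_deriv_of_nonneg (HH_cont P)
    (fun y hy => HH_deriv P hy.1 hy.2) (fun _ _ => GG_nonneg q S _)

lemma GG_lint (P : Par q S h) {y : ℝ} (h0 : 0 ≤ y) (h1 : y ≤ h) :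
    ∫⁻ z in Set.Ioc y h, ENNReal.ofReal (GG q S z) = ENNReal.ofReal (HH q S y) := by
  have hi : IntegrableOn (GG q S) (Set.Ioc y h) :=
    (GG_int P).mono_set (Set.Ioc_subset_Ioc_left h0)
  rw [← ofReal_integral_eq_lintegral_ofReal hi (ae_of_all _ fun z => GG_nonneg q S z),
    ← intervalIntegral.integral_of_le h1,
    intervalIntegral.integral_eq_sub_of_hasDerivAt_of_le h1
      ((HH_cont P).mono (Set.Icc_subset_Icc_left h0))
      (fun z hz => HH_deriv P (h0.trans_lt hz.1) hz.2)
      ((intervalIntegrable_iff_integrableOn_Ioc_of_le h1).2 hi), HH_h P]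
  simp

lemma vf_meas (q S : ℝ) : Measurable (vf q S) := by unfold vf; fun_prop

lemma law (P : Par q S h) :
    (volume.restrict (Set.Ioo (-(π / 2)) (π / 2))).map (vf q S)
      = (volume.restrict (Set.Ioo 0 h)).withDensity (fun y => ENNReal.ofReal (GG q S y)) := by
  have : IsFiniteMeasure ((volume.restrict (Set.Ioo (-(π / 2)) (π / 2))).map (vf q S)) :=
    Measure.isFiniteMeasure_map _ _
  refine Measure.ext_of_Ici _ _ fun y => ?_
  rw [Measure.map_apply (vf_meas q S) measurableSet_Ici,
    Measure.restrict_apply (vf_meas q S measurableSet_Ici),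
    withDensity_apply _ measurableSet_Ici, Measure.restrict_restrict measurableSet_Ici]
  rcases le_or_gt y 0 with h0 | h0
  · have e1 : vf q S ⁻¹' Set.Ici y ∩ Set.Ioo (-(π / 2)) (π / 2) = Set.Ioo (-(π / 2)) (π / 2) := by
      refine Set.inter_eq_right.2 fun φ hφ => ?_
      have hc := cos_pos_of_mem_Ioo hφ
      have q0 := P.q0
      have hv : 0 ≤ vf q S φ := by unfold vf; positivity
      exact h0.trans hv
    have e2 : Set.Ici y ∩ Set.Ioo 0 h = Set.Ioo 0 h :=
      Set.inter_eq_right.2 fun z hz => h0.trans hz.1.le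
    rw [e1, e2, restrict_Ioo_eq_restrict_Ioc, GG_lint P le_rfl P.h0.le, HH_zero P, Real.volume_Ioo]
    congr 1
    ring
  · rcases le_or_gt y h with h1 | h1
    · have e1 : vf q S ⁻¹' Set.Ici y ∩ Set.Ioo (-(π / 2)) (π / 2)
          = Set.Icc (arcsin (sg q S (-1) y)) (arcsin (sg q S 1 y)) := by
        ext φ
        constructor
        · rintro ⟨a, b⟩
          exact (vf_ge_iff P h0 h1 b).1 a
        · intro a
          have b : φ ∈ Set.Ioo (-(π / 2)) (π / 2) := by
            obtain ⟨m1, _⟩ := sg_mem P (Or.inr rfl) h0 h1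
            obtain ⟨_, m2⟩ := sg_mem P (Or.inl rfl) h0 h1
            exact ⟨(Real.neg_pi_div_two_lt_arcsin.2 m1).trans_le a.1,
              a.2.trans_lt (Real.arcsin_lt_pi_div_two.2 m2)⟩
          exact ⟨(vf_ge_iff P h0 h1 b).2 a, b⟩
      have e2 : Set.Ici y ∩ Set.Ioo 0 h = Set.Ico y h := by
        ext z
        simp only [Set.mem_inter_iff, Set.mem_Ici, Set.mem_Ioo, Set.mem_Ico]
        constructor
        · rintro ⟨a, b, c⟩; exact ⟨a, c⟩
        · rintro ⟨a, c⟩; exact ⟨a, h0.trans_le a, c⟩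
      rw [e1, e2, restrict_Ico_eq_restrict_Ioc, GG_lint P h0.le h1, Real.volume_Icc]
      rfl
    · have e1 : vf q S ⁻¹' Set.Ici y ∩ Set.Ioo (-(π / 2)) (π / 2) = ∅ := by
        refine Set.eq_empty_of_forall_notMem ?_
        rintro φ ⟨a, _⟩
        exact absurd (vf_le P φ) (not_le.2 (h1.trans_le a))
      have e2 : Set.Ici y ∩ Set.Ioo 0 h = ∅ := by
        refine Set.eq_empty_of_forall_notMem ?_
        rintro z ⟨a, b⟩
        exact absurd (b.2.trans h1) (not_lt.2 a)
      rw [e1, e2]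
      simp

/-- There is a point with velocity at least `y`. -/
lemma exists_vf (P : Par q S h) {y : ℝ} (h0 : 0 < y) (h1 : y ≤ h) : ∃ φ, y ≤ vf q S φ := by
  refine ⟨arcsin (sg q S 1 y), (vf_ge_iff P h0 h1 ?_).2 ⟨?_, le_rfl⟩⟩
  · obtain ⟨m1, m2⟩ := sg_mem P (Or.inl rfl) h0 h1
    exact ⟨Real.neg_pi_div_two_lt_arcsin.2 m1, Real.arcsin_lt_pi_div_two.2 m2⟩
  · refine Real.monotone_arcsin ?_
    have hy := ysq P h0.le h1
    have q0 := P.q0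
    have hd : 0 < q * (1 - y ^ 2) := by nlinarith
    have := Real.sqrt_nonneg (xi q S y)
    unfold sg
    refine div_le_div_of_nonneg_right ?_ hd.le
    linarith

/-- change of variables -/
lemma law_integral (P : Par q S h) (F : ℝ → ℂ) (hF : Continuous F) :
    ∫ φ in (-(π / 2))..(π / 2), F (vf q S φ) = ∫ y in Set.Ioo 0 h, (GG q S y : ℂ) * F y := by
  have hpi := Real.pi_pos
  rw [intervalIntegral.integral_of_le (by linarith), ← restrict_Ioo_eq_restrict_Ioc,
    ← integral_map (φ := vf q S) (f := F) (vf_meas q S).aemeasurable hF.aestronglyMeasurable, law P,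
    integral_withDensity_eq_integral_toReal_smul (GG_meas q S).ennreal_ofReal (by simp)]
  refine integral_congr_ae (ae_of_all _ fun y => ?_)
  simp only [ENNReal.toReal_ofReal (GG_nonneg q S y), Complex.real_smul]

end Part1

section Part2

lemma rz_sq {ρ : ℝ} (hρ : ρ ∈ Set.Ioo (0 : ℝ) 1) : rz ρ ^ 2 = 1 - ρ ^ 2 := by
  unfold rz
  exact sq_sqrt (by nlinarith [hρ.1, hρ.2])

lemma rz_pos {ρ : ℝ} (hρ : ρ ∈ Set.Ioo (0 : ℝ) 1) : 0 < rz ρ := by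
  unfold rz
  exact Real.sqrt_pos.2 (by nlinarith [hρ.1, hρ.2])

lemma xif_eq {ρ ν : ℝ} (hρ : ρ ∈ Set.Ioo (0 : ℝ) 1) (y : ℝ) :
    xif ρ ν y = xi (ρ * rz ρ) (sin ν) y := by
  unfold xif xi
  rw [cos_sq']
  linear_combination (-y ^ 2) * rz_sq hρ

lemma par {ρ ν : ℝ} (hρ : ρ ∈ Set.Ioo (0 : ℝ) 1)
    (hexc : ∀ n : ℤ, ¬(ρ = 1 / Real.sqrt 2 ∧ ν = π / 2 + n * π)) :
    Par (ρ * rz ρ) (sin ν) (hstar ρ ν) := by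
  have r2 := rz_sq hρ
  have r0 := rz_pos hρ
  have ρ0 := hρ.1
  have S0 := neg_one_le_sin ν
  have S1 := sin_le_one ν
  have q0 : 0 < ρ * rz ρ := by positivity
  have q1 : ρ * rz ρ ≤ 1 / 2 := by nlinarith [sq_nonneg (ρ - rz ρ)]
  have hex : ρ * rz ρ = 1 / 2 → cos ν ≠ 0 := by
    intro hq hc
    have e : ρ = rz ρ := by
      have : (ρ - rz ρ) ^ 2 = 0 := by nlinarith
      linarith [pow_eq_zero_iff (two_ne_zero) |>.1 this]
    obtain ⟨n, hn⟩ := Real.cos_eq_zero_iff.1 hc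
    refine hexc n ⟨?_, ?_⟩
    · rw [← e] at r2
      rw [eq_div_iff (by positivity), ← Real.sqrt_sq ρ0.le, ← Real.sqrt_mul (sq_nonneg _)]
      rw [Real.sqrt_eq_one]
      linarith
    · rw [hn]; ring
  have hS : ρ * rz ρ = 1 / 2 → sin ν ^ 2 < 1 := by
    intro hq
    have := pow_pos (abs_pos.2 (hex hq)) 2
    rw [sq_abs] at this
    nlinarith [sin_sq_add_cos_sq ν]
  have g0 : ρ * rz ρ * (1 + sin ν) < 1 := by
    rcases q1.lt_or_eq with h | h
    · nlinarith
    · have := hS h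
      rw [h]; nlinarith
  have g1 : ρ * rz ρ * (1 - sin ν) < 1 := by
    rcases q1.lt_or_eq with h | h
    · nlinarith
    · have := hS h
      rw [h]; nlinarith
  have hs : ρ ^ 2 * rz ρ ^ 2 = (ρ * rz ρ) ^ 2 := by ring
  unfold hstar
  rw [hs]
  set q := ρ * rz ρ
  set S := sin ν
  have hB : 0 < (1 - q) ^ 2 - q ^ 2 * S ^ 2 := by
    have : (1 - q) ^ 2 - q ^ 2 * S ^ 2 = (1 - q * (1 + S)) * (1 - q * (1 - S)) := by ring
    rw [this]
    exact mul_pos (by linarith) (by linarith)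
  have hA : (1 - q) ^ 2 - q ^ 2 * S ^ 2 < (1 + q) ^ 2 - q ^ 2 * S ^ 2 := by nlinarith
  have sA := Real.sq_sqrt (hB.trans hA).le
  have sB := Real.sq_sqrt hB.le
  have lt := Real.sqrt_lt_sqrt hB.le hA
  have pB := Real.sqrt_pos.2 hB
  set a := √((1 + q) ^ 2 - q ^ 2 * S ^ 2)
  set b := √((1 - q) ^ 2 - q ^ 2 * S ^ 2)
  have hab : (1 / 2 * (a - b)) * (1 / 2 * (a + b)) = q := by nlinarith
  have hsum : (1 / 2 * (a - b)) ^ 2 + (1 / 2 * (a + b)) ^ 2 = 1 + q ^ 2 * (1 - S ^ 2) := by nlinarith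
  have hl : 1 / 2 * (a - b) < 1 / 2 * (a + b) := by linarith
  have hp : 0 < 1 / 2 * (a - b) := by linarith
  generalize 1 / 2 * (a - b) = h at *
  generalize 1 / 2 * (a + b) = k at *
  refine ⟨q0, q1, S0, S1, g0, g1, hp, by nlinarith, fun y => ?_⟩
  unfold xi
  rw [← hsum, ← hab]
  ring

lemma gam_form (ρ ν : ℝ) (α β : ℂ) : ∃ κ : ℝ, ∀ y, gam ρ ν α β y = 1 + κ * y :=
  ⟨_, fun _ => rfl⟩

lemma etaP_eq {ρ ν : ℝ} (hρ : ρ ∈ Set.Ioo (0 : ℝ) 1) (P : Par (ρ * rz ρ) (sin ν) (hstar ρ ν))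
    {y : ℝ} (h0 : 0 ≤ y) (h1 : y < hstar ρ ν) :
    √(etaP ρ ν y) = cc (ρ * rz ρ) (sin ν) 1 y * (1 - y ^ 2) ∧
    √(etaM ρ ν y) = cc (ρ * rz ρ) (sin ν) (-1) y * (1 - y ^ 2) := by
  have hy := ysq P h0 h1.le
  have q0 := P.q0
  have hxi := sq_sqrt (xi_pos P h0 h1).le
  have hy1 : 0 < 1 - y ^ 2 := by linarith
  have hc := cos_sq' ν
  unfold cc etaP etaM sg
  rw [xif_eq hρ, hc]
  constructor
  all_goals
    conv_rhs => arg 2; rw [← Real.sqrt_sq hy1.le]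
    rw [← Real.sqrt_mul' _ (sq_nonneg _)]
    congr 1
    have hs : ρ ^ 2 * rz ρ ^ 2 = (ρ * rz ρ) ^ 2 := by ring
    have hs2 : 2 * ρ * rz ρ = 2 * (ρ * rz ρ) := by ring
    rw [hs, hs2]
    generalize ρ * rz ρ = q at *
    generalize √(xi q (sin ν) y) = r at *
    field_simp
    unfold xi at hxi
    linear_combination hxi

lemma dens_eq {ρ ν : ℝ} (hρ : ρ ∈ Set.Ioo (0 : ℝ) 1) (P : Par (ρ * rz ρ) (sin ν) (hstar ρ ν))
    (α β : ℂ) {y : ℝ} (h0 : 0 < y) (h1 : y < hstar ρ ν) :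
    dens ρ ν α β y = GG (ρ * rz ρ) (sin ν) y * gam ρ ν α β y / (2 * π) ∧
    dens ρ ν α β (-y) = GG (ρ * rz ρ) (sin ν) y * gam ρ ν α β (-y) / (2 * π) := by
  have hy := ysq P h0.le h1.le
  have hy1 : 0 < 1 - y ^ 2 := by linarith
  obtain ⟨e1, e2⟩ := etaP_eq hρ P h0.le h1
  have x1 : xif ρ ν (-y) = xif ρ ν y := by unfold xif; ring
  have x2 : etaP ρ ν (-y) = etaP ρ ν y := by unfold etaP; rw [x1]; ring
  have x3 : etaM ρ ν (-y) = etaM ρ ν y := by unfold etaM; rw [x1]; ring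
  have hr := Real.sqrt_pos.2 (xi_pos P h0.le h1)
  have hpi := Real.pi_pos
  unfold dens
  rw [if_pos ⟨by linarith, h1⟩, if_pos ⟨by linarith, by linarith⟩, x1, x2, x3, e1, e2, xif_eq hρ]
  unfold GG
  constructor
  · field_simp
  · field_simp

lemma dens_zero {ρ ν : ℝ} {α β : ℂ} {y : ℝ} (h : y ∉ Set.Ioo (-(hstar ρ ν)) (hstar ρ ν)) :
    dens ρ ν α β y = 0 := if_neg h

lemma dens_meas (ρ ν : ℝ) (α β : ℂ) : Measurable (dens ρ ν α β) := by
  unfold dens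
  refine Measurable.ite measurableSet_Ioo ?_ measurable_const
  unfold etaP etaM gam xif
  fun_prop

/-- the integral of `F * dens` split into halves -/
lemma dens_int {ρ ν : ℝ} (hρ : ρ ∈ Set.Ioo (0 : ℝ) 1) (P : Par (ρ * rz ρ) (sin ν) (hstar ρ ν))
    (α β : ℂ) : Integrable (dens ρ ν α β) := by
  have hG := (GG_int P)
  have hh := P.h0
  have hpos : IntegrableOn (dens ρ ν α β) (Set.Ioo 0 (hstar ρ ν)) := by
    have h1 : IntegrableOn (fun y => gam ρ ν α β y / (2 * π) * GG (ρ * rz ρ) (sin ν) y) (Set.Ioo 0 (hstar ρ ν)) := by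
      rw [← integrableOn_Ioc_iff_integrableOn_Ioo, ← integrableOn_Icc_iff_integrableOn_Ioc]
      rw [← integrableOn_Icc_iff_integrableOn_Ioc] at hG
      refine hG.continuousOn_mul ?_ isCompact_Icc
      unfold gam; fun_prop
    refine h1.congr_fun (fun y hy => ?_) measurableSet_Ioo
    rw [(dens_eq hρ P α β hy.1 hy.2).1]; ring
  have hneg : IntegrableOn (fun y => dens ρ ν α β (-y)) (Set.Ioo 0 (hstar ρ ν)) := by
    have h1 : IntegrableOn (fun y => gam ρ ν α β (-y) / (2 * π) * GG (ρ * rz ρ) (sin ν) y) (Set.Ioo 0 (hstar ρ ν)) := by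
      rw [← integrableOn_Ioc_iff_integrableOn_Ioo, ← integrableOn_Icc_iff_integrableOn_Ioc]
      rw [← integrableOn_Icc_iff_integrableOn_Ioc] at hG
      refine hG.continuousOn_mul ?_ isCompact_Icc
      unfold gam; fun_prop
    refine h1.congr_fun (fun y hy => ?_) measurableSet_Ioo
    rw [(dens_eq hρ P α β hy.1 hy.2).2]; ring
  have e1 : IntegrableOn (dens ρ ν α β) (Set.Ioi 0) := by
    rw [← Set.Ioo_union_Ici_eq_Ioi hh]
    refine hpos.union ((integrableOn_zero : IntegrableOn (fun _ => (0 : ℝ)) _ _).congr_fun (fun y hy => ?_) measurableSet_Ici)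
    exact (dens_zero (fun h => absurd h.2 (not_lt.2 hy))).symm
  have e2 : IntegrableOn (fun y => dens ρ ν α β (-y)) (Set.Ioi 0) := by
    rw [← Set.Ioo_union_Ici_eq_Ioi hh]
    refine hneg.union ((integrableOn_zero : IntegrableOn (fun _ => (0 : ℝ)) _ _).congr_fun (fun y hy => ?_) measurableSet_Ici)
    exact (dens_zero (fun h => absurd h.1 (not_lt.2 (neg_le_neg hy)))).symm
  rw [← integrableOn_univ, ← Set.Iic_union_Ioi (a := (0 : ℝ))]
  refine IntegrableOn.union ?_ e1
  have := (integrableOn_Ici_iff_integrableOn_Ioi (f := fun y => dens ρ ν α β (-y)) (b := 0)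
    (by simp)).2 e2
  have := IntegrableOn.comp_neg_Iic (c := 0) (f := fun y => dens ρ ν α β (-y)) (by simpa using this)
  simpa only [neg_neg] using this

lemma dens_F {ρ ν : ℝ} (hρ : ρ ∈ Set.Ioo (0 : ℝ) 1) (P : Par (ρ * rz ρ) (sin ν) (hstar ρ ν))
    (α β : ℂ) (F : ℝ → ℂ) (hF : Continuous F) (hb : ∀ y, ‖F y‖ ≤ 1) :
    ∫ y, (dens ρ ν α β y : ℂ) * F y = (1 / (2 * π) : ℂ) *
      ∫ φ in (-(π / 2))..(π / 2), ((gam ρ ν α β (vf (ρ * rz ρ) (sin ν) φ) : ℂ) * F (vf (ρ * rz ρ) (sin ν) φ)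
        + (gam ρ ν α β (-vf (ρ * rz ρ) (sin ν) φ) : ℂ) * F (-vf (ρ * rz ρ) (sin ν) φ)) := by
  have hi : Integrable (fun y => (dens ρ ν α β y : ℂ) * F y) := by
    refine ((dens_int hρ P α β).ofReal (𝕜 := ℂ)).mul_bdd (c := 1) hF.aestronglyMeasurable ?_
    exact ae_of_all _ hb
  have hh := P.h0
  have hgc : Continuous (gam ρ ν α β) := by unfold gam; fun_prop
  rw [law_integral P (fun y => (gam ρ ν α β y : ℂ) * F y + (gam ρ ν α β (-y) : ℂ) * F (-y)) (by fun_prop)]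
  rw [← integral_add_compl (measurableSet_Ioi (a := (0 : ℝ))) hi, Set.compl_Ioi]
  have e1 := integral_comp_neg_Ioi (0 : ℝ) (fun y => (dens ρ ν α β y : ℂ) * F y)
  rw [neg_zero] at e1
  have hi' : Integrable (fun y => (dens ρ ν α β (-y) : ℂ) * F (-y)) := hi.comp_neg
  rw [← e1, ← integral_add hi.integrableOn hi'.integrableOn, ← integral_const_mul]
  rw [← Set.Ioo_union_Ici_eq_Ioi hh]
  rw [setIntegral_union (f := fun y => (dens ρ ν α β y : ℂ) * F y + (dens ρ ν α β (-y) : ℂ) * F (-y)) (by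
      rw [Set.disjoint_left]; intro y hy hy'; exact absurd hy.2 (not_lt.2 hy')) measurableSet_Ici
      (hi.add hi').integrableOn (hi.add hi').integrableOn]
  have e2 : ∫ y in Set.Ici (hstar ρ ν), ((dens ρ ν α β y : ℂ) * F y + (dens ρ ν α β (-y) : ℂ) * F (-y)) = 0 := by
    rw [setIntegral_congr_fun (g := fun _ => (0 : ℂ)) measurableSet_Ici]
    · simp
    · intro y hy
      simp only
      rw [dens_zero, dens_zero]
      · simp
      · intro h; exact absurd h.1 (not_lt.2 (neg_le_neg hy))
      · intro h; exact absurd h.2 (not_lt.2 hy)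
  rw [e2, add_zero]
  refine setIntegral_congr_fun measurableSet_Ioo fun y hy => ?_
  obtain ⟨d1, d2⟩ := dens_eq hρ P α β hy.1 hy.2
  rw [d1, d2]
  push_cast
  ring

end Part2

section Part3

/-- Fourier symbol -/
def Um (ρ ν k : ℝ) : Matrix (Fin 2) (Fin 2) ℂ :=
  Complex.exp (Complex.I * k) • Bm ρ ν + B0 ρ ν + Complex.exp (-(Complex.I * k)) • Bp ρ ν

/-- Fourier transform of the walk -/
def ft (ρ ν : ℝ) (α β : ℂ) (k : ℝ) : ℕ → Fin 2 → ℂ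
  | 0 => ![α, β]
  | t + 1 => (Um ρ ν k).mulVec (ft ρ ν α β k t)

lemma ft_hasSum (ρ ν : ℝ) (α β : ℂ) (k : ℝ) (t : ℕ) (j : Fin 2) :
    HasSum (fun x : ℤ => Complex.exp (-(Complex.I * k * x)) * qwalk ρ ν α β t x j)
      (ft ρ ν α β k t j) := by
  induction t generalizing j with
  | zero =>
    have : (fun x : ℤ => Complex.exp (-(Complex.I * k * x)) * qwalk ρ ν α β 0 x j)
        = fun x : ℤ => if x = 0 then ft ρ ν α β k 0 j else 0 := by
      funext x
      by_cases hx : x = 0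
      · simp [hx, qwalk, ft]
      · simp [hx, qwalk]
    rw [this]
    exact hasSum_ite_eq 0 _
  | succ t ih =>
    have hp : ∀ i, HasSum (fun x : ℤ => Complex.exp (-(Complex.I * k * x)) * qwalk ρ ν α β t (x + 1) i)
        (Complex.exp (Complex.I * k) * ft ρ ν α β k t i) := by
      intro i
      have := ((Equiv.addRight (1 : ℤ)).hasSum_iff.2 (ih i)).mul_left (Complex.exp (Complex.I * k))
      refine this.congr_fun ?_
      intro x
      simp only [Function.comp, Equiv.coe_addRight]
      rw [← mul_assoc, ← Complex.exp_add]
      congr 2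
      push_cast; ring
    have hm : ∀ i, HasSum (fun x : ℤ => Complex.exp (-(Complex.I * k * x)) * qwalk ρ ν α β t (x - 1) i)
        (Complex.exp (-(Complex.I * k)) * ft ρ ν α β k t i) := by
      intro i
      have := ((Equiv.addRight (-1 : ℤ)).hasSum_iff.2 (ih i)).mul_left (Complex.exp (-(Complex.I * k)))
      refine this.congr_fun ?_
      intro x
      simp only [Function.comp, Equiv.coe_addRight]
      rw [← mul_assoc, ← Complex.exp_add, ← sub_eq_add_neg]
      congr 2
      push_cast; ring
    have h := (((((hp 0).mul_left (Bm ρ ν j 0)).add ((hp 1).mul_left (Bm ρ ν j 1))).add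
      (((ih 0).mul_left (B0 ρ ν j 0)).add ((ih 1).mul_left (B0 ρ ν j 1)))).add
      (((hm 0).mul_left (Bp ρ ν j 0)).add ((hm 1).mul_left (Bp ρ ν j 1))))
    have e : ft ρ ν α β k (t + 1) j
        = (Bm ρ ν j 0 * (Complex.exp (Complex.I * k) * ft ρ ν α β k t 0) +
          Bm ρ ν j 1 * (Complex.exp (Complex.I * k) * ft ρ ν α β k t 1) +
        (B0 ρ ν j 0 * ft ρ ν α β k t 0 + B0 ρ ν j 1 * ft ρ ν α β k t 1) +
        (Bp ρ ν j 0 * (Complex.exp (-(Complex.I * k)) * ft ρ ν α β k t 0) +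
        Bp ρ ν j 1 * (Complex.exp (-(Complex.I * k)) * ft ρ ν α β k t 1))) := by
      simp only [ft, Um, Matrix.mulVec, dotProduct, Fin.sum_univ_two, Matrix.add_apply,
        Matrix.smul_apply, smul_eq_mul]
      ring
    rw [e]
    refine h.congr_fun fun x => ?_
    simp only [qwalk, Pi.add_apply, Matrix.mulVec, dotProduct, Fin.sum_univ_two]
    ring

lemma qwalk_supp (ρ ν : ℝ) (α β : ℂ) (t : ℕ) (x : ℤ) (hx : x ∉ Finset.Icc (-(t : ℤ)) t) :
    qwalk ρ ν α β t x = 0 := by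
  induction t generalizing x with
  | zero =>
    have : x ≠ 0 := by rintro rfl; simp at hx
    simp [qwalk, this]
  | succ t ih =>
    rw [Finset.mem_Icc] at hx
    push_cast at hx
    rw [qwalk, ih, ih, ih]
    · simp
    all_goals
      rw [Finset.mem_Icc]
      omega

lemma ft_sum (ρ ν : ℝ) (α β : ℂ) (k : ℝ) (t : ℕ) (j : Fin 2) :
    ft ρ ν α β k t j = ∑ x ∈ Finset.Icc (-(t : ℤ)) t,
      Complex.exp (-(Complex.I * k * x)) * qwalk ρ ν α β t x j := by
  refine (ft_hasSum ρ ν α β k t j).unique (hasSum_sum_of_ne_finset_zero ?_)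
  intro x hx
  rw [qwalk_supp ρ ν α β t x hx]
  simp

lemma orth (ν : ℝ) (m : ℤ) : ∫ φ in (-(π / 2))..(3 * π / 2),
    Complex.exp (Complex.I * ((φ + ν : ℝ) : ℂ) * m) = if m = 0 then 2 * (π : ℂ) else 0 := by
  split_ifs with h
  · simp [h]
    ring
  · have hc : Complex.I * (m : ℂ) ≠ 0 := mul_ne_zero Complex.I_ne_zero (by exact_mod_cast h)
    have e : ∀ φ : ℝ, Complex.exp (Complex.I * ((φ + ν : ℝ) : ℂ) * m)
        = Complex.exp (Complex.I * ν * m) * Complex.exp (Complex.I * m * φ) := by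
      intro φ
      rw [← Complex.exp_add]; congr 1; push_cast; ring
    simp_rw [e]
    rw [intervalIntegral.integral_const_mul, integral_exp_mul_complex hc]
    have : Complex.exp (Complex.I * m * ((3 * π / 2 : ℝ) : ℂ))
        = Complex.exp (Complex.I * m * ((-(π / 2) : ℝ) : ℂ)) := by
      rw [Complex.exp_eq_exp_iff_exists_int]
      exact ⟨m, by push_cast; ring⟩
    rw [this]
    simp

lemma parseval (ν : ℝ) (F : Finset ℤ) (a b : ℤ → ℂ) :
    ∫ φ in (-(π / 2))..(3 * π / 2),
      (starRingEnd ℂ) (∑ x ∈ F, Complex.exp (-(Complex.I * ((φ + ν : ℝ) : ℂ) * x)) * a x)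
        * (∑ y ∈ F, Complex.exp (-(Complex.I * ((φ + ν : ℝ) : ℂ) * y)) * b y)
      = 2 * (π : ℂ) * ∑ x ∈ F, (starRingEnd ℂ) (a x) * b x := by
  have e : ∀ φ : ℝ, (starRingEnd ℂ) (∑ x ∈ F, Complex.exp (-(Complex.I * ((φ + ν : ℝ) : ℂ) * x)) * a x)
        * (∑ y ∈ F, Complex.exp (-(Complex.I * ((φ + ν : ℝ) : ℂ) * y)) * b y)
      = ∑ x ∈ F, ∑ y ∈ F, Complex.exp (Complex.I * ((φ + ν : ℝ) : ℂ) * ((x - y : ℤ) : ℂ)) *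
        ((starRingEnd ℂ) (a x) * b y) := by
    intro φ
    rw [map_sum, Finset.sum_mul_sum]
    refine Finset.sum_congr rfl fun x _ => Finset.sum_congr rfl fun y _ => ?_
    rw [map_mul, ← Complex.exp_conj]
    have : Complex.exp (Complex.I * ((φ + ν : ℝ) : ℂ) * ((x - y : ℤ) : ℂ))
      = Complex.exp ((starRingEnd ℂ) (-(Complex.I * ((φ + ν : ℝ) : ℂ) * x)))
        * Complex.exp (-(Complex.I * ((φ + ν : ℝ) : ℂ) * y)) := by
      rw [← Complex.exp_add]
      congr 1
      simp only [map_neg, map_mul, Complex.conj_I, Complex.conj_ofReal, map_intCast]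
      push_cast
      ring
    rw [this]
    ring
  simp_rw [e]
  rw [intervalIntegral.integral_finsetSum]
  · rw [Finset.mul_sum]
    refine Finset.sum_congr rfl fun x hx => ?_
    rw [intervalIntegral.integral_finsetSum]
    · simp_rw [intervalIntegral.integral_mul_const, orth, sub_eq_zero]
      simp [hx]
    · intro y _
      exact Continuous.intervalIntegrable (by fun_prop) _ _
  · intro x _
    exact Continuous.intervalIntegrable (by fun_prop) _ _

lemma charsum (ρ ν : ℝ) (α β : ℂ) (t : ℕ) (δ : ℝ) :
    2 * (π : ℂ) * ∑ x ∈ Finset.Icc (-(t : ℤ)) t, Complex.exp (Complex.I * δ * x) * (qprob ρ ν α β t x : ℂ)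
      = ∫ φ in (-(π / 2))..(3 * π / 2), ∑ j : Fin 2,
        (starRingEnd ℂ) (ft ρ ν α β (φ + ν) t j) * ft ρ ν α β (φ - δ + ν) t j := by
  have e : ∀ j : Fin 2, ∀ φ : ℝ, (starRingEnd ℂ) (ft ρ ν α β (φ + ν) t j) * ft ρ ν α β (φ - δ + ν) t j
    = (starRingEnd ℂ) (∑ x ∈ Finset.Icc (-(t : ℤ)) t, Complex.exp (-(Complex.I * ((φ + ν : ℝ) : ℂ) * x)) * qwalk ρ ν α β t x j)
        * (∑ y ∈ Finset.Icc (-(t : ℤ)) t, Complex.exp (-(Complex.I * ((φ + ν : ℝ) : ℂ) * y)) *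
          (Complex.exp (Complex.I * δ * y) * qwalk ρ ν α β t y j)) := by
    intro j φ
    rw [ft_sum, ft_sum]
    congr 1
    refine Finset.sum_congr rfl fun y _ => ?_
    rw [← mul_assoc, ← Complex.exp_add]
    congr 2
    push_cast
    ring
  rw [intervalIntegral.integral_finsetSum]
  · simp_rw [e]
    simp_rw [parseval]
    rw [← Finset.mul_sum, Fin.sum_univ_two, ← Finset.sum_add_distrib]
    congr 1
    refine Finset.sum_congr rfl fun x _ => ?_
    unfold qprob
    push_cast
    rw [← Complex.conj_mul', ← Complex.conj_mul']
    ring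
  · intro j _
    simp_rw [e]
    exact Continuous.intervalIntegrable (by fun_prop) _ _

end Part3

section Part4

def sn (ρ ν φ : ℝ) : ℝ := ρ * rz ρ * (sin φ - sin ν)
def cn (ρ ν φ : ℝ) : ℝ := √(1 - (ρ * rz ρ) ^ 2 * (sin φ - sin ν) ^ 2)
def nn (ρ ν φ : ℝ) : ℝ := -(ρ * rz ρ * (cos ν + cos φ))
def ww (ρ ν φ : ℝ) : ℂ := (rz ρ : ℂ) ^ 2 * (cos (φ + ν) - Complex.I * sin (φ + ν)) - (ρ : ℂ) ^ 2

lemma exp_pos' (x : ℝ) : Complex.exp (Complex.I * x) = (cos x : ℂ) + Complex.I * (sin x : ℂ) := by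
  rw [mul_comm, Complex.exp_mul_I, ← Complex.ofReal_cos, ← Complex.ofReal_sin]; ring

lemma exp_neg' (x : ℝ) : Complex.exp (-(Complex.I * x)) = (cos x : ℂ) - Complex.I * (sin x : ℂ) := by
  have := exp_pos' (-x)
  rw [cos_neg, sin_neg] at this
  push_cast [-Complex.ofReal_cos, -Complex.ofReal_sin] at this
  rw [← mul_neg, this]; ring

lemma Um_entries (ρ ν φ : ℝ) :
    Um ρ ν (φ + ν) 0 0 = nn ρ ν φ + Complex.I * sn ρ ν φ ∧
    Um ρ ν (φ + ν) 0 1 = ww ρ ν φ ∧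
    Um ρ ν (φ + ν) 1 0 = (starRingEnd ℂ) (ww ρ ν φ) ∧
    Um ρ ν (φ + ν) 1 1 = -nn ρ ν φ + Complex.I * sn ρ ν φ := by
  have hc : ((cos ν : ℝ) : ℂ) ^ 2 + ((sin ν : ℝ) : ℂ) ^ 2 = 1 := by
    have := cos_sq_add_sin_sq ν
    exact_mod_cast this
  have hI := Complex.I_sq
  have ha : (starRingEnd ℂ) (az ρ ν) = ρ * ((cos ν : ℂ) - Complex.I * (sin ν : ℂ)) := by
    unfold az
    rw [exp_pos', map_mul, map_add, map_mul]
    simp only [Complex.conj_ofReal, Complex.conj_I]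
    ring
  have ha' : az ρ ν = ρ * ((cos ν : ℂ) + Complex.I * (sin ν : ℂ)) := by
    unfold az
    rw [exp_pos']
  simp only [Um, Bm, B0, Bp, Matrix.add_apply, Matrix.smul_apply, smul_eq_mul, Matrix.of_apply,
    Matrix.cons_val', Matrix.cons_val_zero, Matrix.cons_val_one, Matrix.cons_val_fin_one, ha,
    exp_pos', exp_neg']
  rw [ha']
  unfold nn sn ww
  simp only [map_sub, map_mul, map_pow, Complex.conj_ofReal, Complex.conj_I]
  rw [cos_add, sin_add]
  push_cast [-Complex.ofReal_cos, -Complex.ofReal_sin]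
  generalize ((cos ν : ℝ) : ℂ) = C at *
  generalize ((sin ν : ℝ) : ℂ) = D at *
  generalize ((cos φ : ℝ) : ℂ) = c at *
  generalize ((sin φ : ℝ) : ℂ) = d at *
  generalize (rz ρ : ℂ) = r at *
  generalize (ρ : ℂ) = p at *
  generalize Complex.I = I at *
  refine ⟨?_, by ring, ?_, ?_⟩
  · linear_combination (p * r * (D * (d * C + c * D))) * hI + (-p * r * (c - I * d)) * hc
  · ring
  · linear_combination (-p * r * (D * (d * C + c * D))) * hI + (p * r * (c + I * d)) * hc

lemma norm_rel {ρ : ℝ} (hρ : ρ ∈ Set.Ioo (0 : ℝ) 1) (ν φ : ℝ) :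
    ((nn ρ ν φ : ℝ) : ℂ) ^ 2 + ((sn ρ ν φ : ℝ) : ℂ) ^ 2 + ww ρ ν φ * (starRingEnd ℂ) (ww ρ ν φ) = 1 := by
  have hc : ((cos ν : ℝ) : ℂ) ^ 2 + ((sin ν : ℝ) : ℂ) ^ 2 = 1 := by
    have := cos_sq_add_sin_sq ν
    exact_mod_cast this
  have hd : ((cos φ : ℝ) : ℂ) ^ 2 + ((sin φ : ℝ) : ℂ) ^ 2 = 1 := by
    have := cos_sq_add_sin_sq φ
    exact_mod_cast this
  have he : ((cos (φ + ν) : ℝ) : ℂ) ^ 2 + ((sin (φ + ν) : ℝ) : ℂ) ^ 2 = 1 := by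
    have := cos_sq_add_sin_sq (φ + ν)
    exact_mod_cast this
  have hf : ((cos (φ + ν) : ℝ) : ℂ) = (cos φ : ℝ) * (cos ν : ℝ) - (sin φ : ℝ) * (sin ν : ℝ) := by
    rw [cos_add]; push_cast; ring
  have hr : (rz ρ : ℂ) ^ 2 = 1 - (ρ : ℂ) ^ 2 := by
    have := rz_sq hρ
    exact_mod_cast this
  have hI := Complex.I_sq
  unfold nn sn ww
  simp only [map_sub, map_mul, map_pow, Complex.conj_ofReal, Complex.conj_I]
  push_cast [-Complex.ofReal_cos, -Complex.ofReal_sin]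
  generalize ((cos (φ + ν) : ℝ) : ℂ) = X at *
  generalize ((sin (φ + ν) : ℝ) : ℂ) = Y at *
  generalize ((cos ν : ℝ) : ℂ) = C at *
  generalize ((sin ν : ℝ) : ℂ) = D at *
  generalize ((cos φ : ℝ) : ℂ) = c at *
  generalize ((sin φ : ℝ) : ℂ) = d at *
  generalize (rz ρ : ℂ) = r at *
  generalize (ρ : ℂ) = p at *
  generalize Complex.I = I at *
  linear_combination (-r ^ 4 * Y ^ 2) * hI + r ^ 4 * he + p ^ 2 * r ^ 2 * hc + p ^ 2 * r ^ 2 * hd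
    - 2 * p ^ 2 * r ^ 2 * hf + (r ^ 2 + p ^ 2 + 1) * hr

/-- eigenvectors -/
def AA (ρ ν : ℝ) (α β : ℂ) (e φ : ℝ) : Fin 2 → ℂ :=
  ![(α + e * (nn ρ ν φ * α + ww ρ ν φ * β) / cn ρ ν φ) / 2,
    (β + e * ((starRingEnd ℂ) (ww ρ ν φ) * α - nn ρ ν φ * β) / cn ρ ν φ) / 2]

def lam (ρ ν e φ : ℝ) : ℂ := e * cn ρ ν φ + Complex.I * sn ρ ν φ

variable {ρ ν : ℝ}

lemma cn_pos {h : ℝ} (P : Par (ρ * rz ρ) (sin ν) h) (φ : ℝ) : 0 < cn ρ ν φ :=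
  Real.sqrt_pos.2 (P.gapφ φ)

lemma cn_sq {h : ℝ} (P : Par (ρ * rz ρ) (sin ν) h) (φ : ℝ) :
    (cn ρ ν φ : ℂ) ^ 2 = 1 - (sn ρ ν φ : ℂ) ^ 2 := by
  have := sq_sqrt (P.gapφ φ).le
  unfold cn
  rw [← Complex.ofReal_pow, this]
  unfold sn
  push_cast
  ring

lemma nw_rel {h : ℝ} (hρ : ρ ∈ Set.Ioo (0 : ℝ) 1) (P : Par (ρ * rz ρ) (sin ν) h) (φ : ℝ) :
    (nn ρ ν φ : ℂ) ^ 2 + ww ρ ν φ * (starRingEnd ℂ) (ww ρ ν φ) = (cn ρ ν φ : ℂ) ^ 2 := by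
  rw [cn_sq P φ]
  linear_combination norm_rel hρ ν φ

lemma ft_eq {h : ℝ} (hρ : ρ ∈ Set.Ioo (0 : ℝ) 1) (P : Par (ρ * rz ρ) (sin ν) h) (α β : ℂ) (φ : ℝ)
    (t : ℕ) (j : Fin 2) :
    ft ρ ν α β (φ + ν) t j = lam ρ ν 1 φ ^ t * AA ρ ν α β 1 φ j + lam ρ ν (-1) φ ^ t * AA ρ ν α β (-1) φ j := by
  have hc : (cn ρ ν φ : ℂ) ≠ 0 := by exact_mod_cast (cn_pos P φ).ne'
  have hnw := nw_rel hρ P φ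
  induction t generalizing j with
  | zero =>
    fin_cases j
    · simp [ft, AA]; ring
    · simp [ft, AA]; ring
  | succ t ih =>
    obtain ⟨u1, u2, u3, u4⟩ := Um_entries ρ ν φ
    have i0 := ih 0
    have i1 := ih 1
    have key : ∀ e : ℝ, e ^ 2 = 1 →
      Um ρ ν (φ + ν) 0 0 * AA ρ ν α β e φ 0 + Um ρ ν (φ + ν) 0 1 * AA ρ ν α β e φ 1 = lam ρ ν e φ * AA ρ ν α β e φ 0 ∧
      Um ρ ν (φ + ν) 1 0 * AA ρ ν α β e φ 0 + Um ρ ν (φ + ν) 1 1 * AA ρ ν α β e φ 1 = lam ρ ν e φ * AA ρ ν α β e φ 1 := by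
      intro e he
      have he' : (e : ℂ) ^ 2 = 1 := by exact_mod_cast he
      rw [u1, u2, u3, u4]
      simp only [AA, lam, Matrix.cons_val_zero, Matrix.cons_val_one]
      generalize (e : ℂ) = e at *
      generalize (cn ρ ν φ : ℂ) = c at *
      generalize (nn ρ ν φ : ℂ) = n at *
      generalize (starRingEnd ℂ) (ww ρ ν φ) = w' at *
      generalize ww ρ ν φ = w at *
      constructor
      · field_simp
        linear_combination (e * α) * hnw - c * (n * α + w * β) * he'
      · field_simp
        linear_combination (e * β) * hnw - c * (w' * α - n * β) * he'
    obtain ⟨p0, p1⟩ := key 1 (by norm_num)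
    obtain ⟨m0, m1⟩ := key (-1) (by norm_num)
    simp only [ft, Matrix.mulVec, dotProduct, Fin.sum_univ_two]
    rw [i0, i1]
    fin_cases j
    · simp only [Fin.zero_eta]
      linear_combination (lam ρ ν 1 φ ^ t) * p0 + (lam ρ ν (-1) φ ^ t) * m0
    · simp only [Fin.mk_one]
      linear_combination (lam ρ ν 1 φ ^ t) * p1 + (lam ρ ν (-1) φ ^ t) * m1

/-- energy expectation -/
def EE (ρ ν : ℝ) (α β : ℂ) (φ : ℝ) : ℝ :=
  nn ρ ν φ * (‖α‖ ^ 2 - ‖β‖ ^ 2) + 2 * ((starRingEnd ℂ) α * ww ρ ν φ * β).re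

lemma inner_AA {h : ℝ} (hρ : ρ ∈ Set.Ioo (0 : ℝ) 1) (P : Par (ρ * rz ρ) (sin ν) h) (α β : ℂ)
    (hαβ : ‖α‖ ^ 2 + ‖β‖ ^ 2 = 1) (φ e f : ℝ) :
    ∑ j, (starRingEnd ℂ) (AA ρ ν α β e φ j) * AA ρ ν α β f φ j
      = (((1 + e * f + (e + f) * (EE ρ ν α β φ / cn ρ ν φ)) / 4 : ℝ) : ℂ) := by
  have hc : (cn ρ ν φ : ℂ) ≠ 0 := by exact_mod_cast (cn_pos P φ).ne'
  have hnw := nw_rel hρ P φ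
  have hn : α * (starRingEnd ℂ) α + β * (starRingEnd ℂ) β = 1 := by
    rw [Complex.mul_conj', Complex.mul_conj']
    exact_mod_cast hαβ
  have hE : (EE ρ ν α β φ : ℂ) = nn ρ ν φ * (α * (starRingEnd ℂ) α - β * (starRingEnd ℂ) β)
      + ((starRingEnd ℂ) α * ww ρ ν φ * β + α * (starRingEnd ℂ) (ww ρ ν φ) * (starRingEnd ℂ) β) := by
    unfold EE
    push_cast
    rw [Complex.mul_conj', Complex.mul_conj']
    congr 1
    have := Complex.add_conj ((starRingEnd ℂ) α * ww ρ ν φ * β)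
    simp only [map_mul, Complex.conj_conj] at this
    rw [this]; push_cast; ring
  push_cast
  rw [hE]
  simp only [Fin.sum_univ_two, AA, Matrix.cons_val_zero, Matrix.cons_val_one, map_add, map_sub, map_mul,
    map_div₀, Complex.conj_ofReal, Complex.conj_conj, map_ofNat]
  generalize (e : ℂ) = e at *
  generalize (f : ℂ) = f at *
  generalize (cn ρ ν φ : ℂ) = c at *
  generalize (nn ρ ν φ : ℂ) = n at *
  generalize (starRingEnd ℂ) (ww ρ ν φ) = w' at *
  generalize ww ρ ν φ = w at *
  generalize (starRingEnd ℂ) α = α' at *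
  generalize (starRingEnd ℂ) β = β' at *
  field_simp
  linear_combination 4 * (c ^ 2 + e * f * c ^ 2) * hn + 4 * e * f * (α * α' + β * β') * hnw

lemma ft_norm (hρ : ρ ∈ Set.Ioo (0 : ℝ) 1) (α β : ℂ)
    (hαβ : ‖α‖ ^ 2 + ‖β‖ ^ 2 = 1) (φ : ℝ) (t : ℕ) :
    ‖ft ρ ν α β (φ + ν) t 0‖ ^ 2 + ‖ft ρ ν α β (φ + ν) t 1‖ ^ 2 = 1 := by
  induction t with
  | zero => simpa [ft] using hαβ
  | succ t ih =>
    obtain ⟨u1, u2, u3, u4⟩ := Um_entries ρ ν φ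
    have hr := norm_rel hρ ν φ
    have hI := Complex.I_sq
    rw [← ih]
    apply Complex.ofReal_injective
    push_cast
    simp only [← Complex.mul_conj']
    simp only [ft, Matrix.mulVec, dotProduct, Fin.sum_univ_two, u1, u2, u3, u4, map_add, map_mul, map_neg,
      Complex.conj_ofReal, Complex.conj_conj, Complex.conj_I]
    generalize ft ρ ν α β (φ + ν) t 0 = x at *
    generalize ft ρ ν α β (φ + ν) t 1 = y at *
    generalize (sn ρ ν φ : ℂ) = s at *
    generalize (nn ρ ν φ : ℂ) = n at *
    generalize (starRingEnd ℂ) (ww ρ ν φ) = w' at *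
    generalize ww ρ ν φ = w at *
    generalize (starRingEnd ℂ) x = x' at *
    generalize (starRingEnd ℂ) y = y' at *
    generalize Complex.I = I at *
    linear_combination (x * x' + y * y') * hr - s ^ 2 * (x * x' + y * y') * hI

lemma ft_bound (hρ : ρ ∈ Set.Ioo (0 : ℝ) 1) (α β : ℂ)
    (hαβ : ‖α‖ ^ 2 + ‖β‖ ^ 2 = 1) (φ φ' : ℝ) (t : ℕ) :
    ‖∑ j : Fin 2, (starRingEnd ℂ) (ft ρ ν α β (φ + ν) t j) * ft ρ ν α β (φ' + ν) t j‖ ≤ 1 := by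
  have a := ft_norm (ν := ν) hρ α β hαβ φ t
  have b := ft_norm (ν := ν) hρ α β hαβ φ' t
  refine (norm_sum_le _ _).trans ?_
  simp only [Fin.sum_univ_two, norm_mul, RCLike.norm_conj]
  nlinarith [sq_nonneg (‖ft ρ ν α β (φ + ν) t 0‖ - ‖ft ρ ν α β (φ' + ν) t 0‖),
    sq_nonneg (‖ft ρ ν α β (φ + ν) t 1‖ - ‖ft ρ ν α β (φ' + ν) t 1‖)]

lemma EE_diff {h : ℝ} (hρ : ρ ∈ Set.Ioo (0 : ℝ) 1) (P : Par (ρ * rz ρ) (sin ν) h) (α β : ℂ) (φ e : ℝ) :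
    gam ρ ν α β (e * vf (ρ * rz ρ) (sin ν) φ)
      = 1 - e * (EE ρ ν α β φ - EE ρ ν α β (π - φ)) / (2 * cn ρ ν φ) := by
  have hc := cn_pos P φ
  have hv : vf (ρ * rz ρ) (sin ν) φ = ρ * rz ρ * cos φ / cn ρ ν φ := rfl
  have r0 := rz_pos hρ
  have ρ0 := hρ.1
  have hd : ww ρ ν φ = ww ρ ν (π - φ) + 2 * (rz ρ : ℂ) ^ 2 * cos φ * ((cos ν : ℝ) - Complex.I * (sin ν : ℝ)) := by
    unfold ww
    have e1 : cos (π - φ + ν) = - (cos φ * cos ν + sin φ * sin ν) := by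
      rw [show π - φ + ν = π - (φ - ν) by ring, cos_pi_sub, cos_sub]
    have e2 : sin (π - φ + ν) = sin φ * cos ν - cos φ * sin ν := by
      rw [show π - φ + ν = π - (φ - ν) by ring, sin_pi_sub, sin_sub]
    rw [e1, e2, cos_add, sin_add]
    push_cast
    ring
  have hn : nn ρ ν φ = nn ρ ν (π - φ) - 2 * (ρ * rz ρ) * cos φ := by
    unfold nn; rw [cos_pi_sub]; ring
  have hre : ((starRingEnd ℂ) α * ww ρ ν φ * β).re - ((starRingEnd ℂ) α * ww ρ ν (π - φ) * β).re
      = 2 * rz ρ ^ 2 * cos φ * ((α * (starRingEnd ℂ) β).re * cos ν - (α * (starRingEnd ℂ) β).im * sin ν) := by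
    rw [← Complex.sub_re, hd]
    have : (starRingEnd ℂ) α * (ww ρ ν (π - φ) + 2 * (rz ρ : ℂ) ^ 2 * cos φ * ((cos ν : ℝ) - Complex.I * (sin ν : ℝ))) * β
      - (starRingEnd ℂ) α * ww ρ ν (π - φ) * β
      = ((2 * rz ρ ^ 2 * cos φ : ℝ) : ℂ) * ((starRingEnd ℂ) α * ((cos ν : ℝ) - Complex.I * (sin ν : ℝ)) * β) := by
      push_cast; ring
    rw [this, Complex.re_ofReal_mul]
    congr 1
    simp only [Complex.mul_re, Complex.mul_im, Complex.sub_re, Complex.sub_im, Complex.conj_re, Complex.conj_im,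
      Complex.ofReal_re, Complex.ofReal_im, Complex.I_re, Complex.I_im]
    ring
  have hE : EE ρ ν α β φ - EE ρ ν α β (π - φ) = -(2 * (ρ * rz ρ) * cos φ) * (‖α‖ ^ 2 - ‖β‖ ^ 2)
     + 2 * (2 * rz ρ ^ 2 * cos φ * ((α * (starRingEnd ℂ) β).re * cos ν - (α * (starRingEnd ℂ) β).im * sin ν)) := by
    rw [← hre]; unfold EE; rw [hn]; ring
  rw [hE, hv]
  unfold gam
  field_simp
  ring

lemma cn_symm (ρ ν φ : ℝ) : cn ρ ν (π - φ) = cn ρ ν φ := by unfold cn; rw [sin_pi_sub]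
lemma vf_symm (q S φ : ℝ) : vf q S (π - φ) = -vf q S φ := by
  unfold vf; rw [sin_pi_sub, cos_pi_sub]; ring

end Part4

section Part5
variable {ρ ν : ℝ}

def th (ρ ν φ : ℝ) : ℝ := arcsin (sn ρ ν φ)

lemma sn_lt {h : ℝ} (P : Par (ρ * rz ρ) (sin ν) h) (φ : ℝ) : -1 < sn ρ ν φ ∧ sn ρ ν φ < 1 := by
  have := P.gapφ φ
  rw [← abs_lt, ← sq_lt_one_iff_abs_lt_one]
  unfold sn
  nlinarith

lemma lam_one {h : ℝ} (P : Par (ρ * rz ρ) (sin ν) h) (φ : ℝ) :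
    lam ρ ν 1 φ = Complex.exp (Complex.I * th ρ ν φ) := by
  obtain ⟨a, b⟩ := sn_lt P φ
  rw [exp_pos']
  unfold lam th
  rw [cos_arcsin, sin_arcsin a.le b.le]
  unfold cn sn
  rw [mul_pow (ρ * rz ρ) (sin φ - sin ν) 2]
  simp

lemma lam_neg {h : ℝ} (P : Par (ρ * rz ρ) (sin ν) h) (φ : ℝ) :
    lam ρ ν (-1) φ = -Complex.exp (-(Complex.I * th ρ ν φ)) := by
  obtain ⟨a, b⟩ := sn_lt P φ
  rw [exp_neg']
  unfold lam th
  rw [cos_arcsin, sin_arcsin a.le b.le]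
  unfold cn sn
  rw [mul_pow (ρ * rz ρ) (sin φ - sin ν) 2]
  push_cast
  ring

lemma th_deriv {h : ℝ} (P : Par (ρ * rz ρ) (sin ν) h) (φ : ℝ) :
    HasDerivAt (th ρ ν) (vf (ρ * rz ρ) (sin ν) φ) φ := by
  obtain ⟨a, b⟩ := sn_lt P φ
  have hs : HasDerivAt (sn ρ ν) (ρ * rz ρ * cos φ) φ :=
    ((Real.hasDerivAt_sin φ).sub_const (sin ν)).const_mul (ρ * rz ρ)
  refine HasDerivAt.congr_deriv (f := th ρ ν) ((hasDerivAt_arcsin a.ne' b.ne).comp φ hs) ?_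
  unfold vf sn
  rw [mul_pow (ρ * rz ρ) (sin φ - sin ν) 2]
  ring

lemma th_lim {h : ℝ} (P : Par (ρ * rz ρ) (sin ν) h) (φ u : ℝ) :
    Tendsto (fun t : ℕ => (t : ℝ) * (th ρ ν (φ - u / t) - th ρ ν φ)) atTop
      (𝓝 (-(u * vf (ρ * rz ρ) (sin ν) φ))) := by
  have hd : HasDerivAt (fun s : ℝ => th ρ ν (φ - u * s)) (vf (ρ * rz ρ) (sin ν) φ * (-u)) 0 := by
    have h1 : HasDerivAt (fun s : ℝ => φ - u * s) (-u) 0 := by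
      simpa using ((hasDerivAt_id (0 : ℝ)).const_mul u).const_sub φ
    have h2 : HasDerivAt (th ρ ν) (vf (ρ * rz ρ) (sin ν) φ) (φ - u * 0) := by
      simpa using th_deriv P φ
    exact HasDerivAt.comp (h₂ := th ρ ν) (h := fun s : ℝ => φ - u * s) (0 : ℝ) h2 h1
  have := hd.tendsto_slope_zero_right.comp
    ((tendsto_inv_atTop_nhdsGT_zero (𝕜 := ℝ)).comp tendsto_natCast_atTop_atTop)
  convert this using 2
  · simp [div_eq_mul_inv]
  · ring

lemma AA_cont {h : ℝ} (P : Par (ρ * rz ρ) (sin ν) h) (α β : ℂ) (e : ℝ) (j : Fin 2) :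
    Continuous (fun φ => AA ρ ν α β e φ j) := by
  have hc : ∀ φ, (cn ρ ν φ : ℂ) ≠ 0 := fun φ => by exact_mod_cast (cn_pos P φ).ne'
  have h1 : Continuous (cn ρ ν) := by unfold cn; fun_prop
  have h2 : Continuous (nn ρ ν) := by unfold nn; fun_prop
  have h3 : Continuous (ww ρ ν) := by
    unfold ww
    have := Complex.continuous_ofReal
    fun_prop
  have h4 : Continuous (fun φ => (starRingEnd ℂ) (ww ρ ν φ)) := Complex.continuous_conj.comp h3
  fin_cases j
  · simp only [AA, Fin.zero_eta, Matrix.cons_val_zero]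
    refine Continuous.div_const (continuous_const.add (Continuous.div ?_ (by fun_prop) hc)) 2
    fun_prop
  · simp only [AA, Fin.mk_one, Matrix.cons_val_one]
    refine Continuous.div_const (continuous_const.add (Continuous.div ?_ (by fun_prop) hc)) 2
    fun_prop

def pp (ρ ν : ℝ) (α β : ℂ) (e φ : ℝ) : ℝ := (1 + e * (EE ρ ν α β φ / cn ρ ν φ)) / 2

lemma pp_nonneg {h : ℝ} (hρ : ρ ∈ Set.Ioo (0 : ℝ) 1) (P : Par (ρ * rz ρ) (sin ν) h) (α β : ℂ)
    (hαβ : ‖α‖ ^ 2 + ‖β‖ ^ 2 = 1) (φ e : ℝ) (he : e ^ 2 = 1) : 0 ≤ pp ρ ν α β e φ := by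
  have := inner_AA hρ P α β hαβ φ e e
  have h2 : ((1 + e * e + (e + e) * (EE ρ ν α β φ / cn ρ ν φ)) / 4 : ℝ) = pp ρ ν α β e φ := by
    unfold pp; linear_combination he / 4
  rw [h2] at this
  simp only [Complex.conj_mul'] at this
  have h3 : ∑ j, ‖AA ρ ν α β e φ j‖ ^ 2 = pp ρ ν α β e φ := by exact_mod_cast this
  rw [← h3]
  positivity

lemma ptlim {h : ℝ} (hρ : ρ ∈ Set.Ioo (0 : ℝ) 1) (P : Par (ρ * rz ρ) (sin ν) h) (α β : ℂ)
    (hαβ : ‖α‖ ^ 2 + ‖β‖ ^ 2 = 1) (φ u : ℝ) :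
    Tendsto (fun t : ℕ => ∑ j : Fin 2, (starRingEnd ℂ) (ft ρ ν α β (φ + ν) t j) *
        ft ρ ν α β (φ - u / t + ν) t j) atTop
      (𝓝 (Complex.exp (Complex.I * ((-(u * vf (ρ * rz ρ) (sin ν) φ) : ℝ) : ℂ)) * pp ρ ν α β 1 φ
        + Complex.exp (-(Complex.I * ((-(u * vf (ρ * rz ρ) (sin ν) φ) : ℝ) : ℂ))) * pp ρ ν α β (-1) φ)) := by
  have hsh : Tendsto (fun t : ℕ => φ - u / t) atTop (𝓝 φ) := by
    simpa using (tendsto_const_div_atTop_nhds_zero_nat u).const_sub φ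
  have hin : ∀ e f : ℝ, Tendsto (fun t : ℕ => ∑ j : Fin 2, (starRingEnd ℂ) (AA ρ ν α β e φ j) *
      AA ρ ν α β f (φ - u / t) j) atTop
      (𝓝 (((1 + e * f + (e + f) * (EE ρ ν α β φ / cn ρ ν φ)) / 4 : ℝ) : ℂ)) := by
    intro e f
    rw [← inner_AA hρ P α β hαβ φ e f]
    refine tendsto_finsetSum _ fun j _ => ?_
    exact (((AA_cont P α β f j).tendsto φ).comp hsh).const_mul _
  have hth := th_lim P φ u
  have hx : Tendsto (fun t : ℕ => Complex.exp (Complex.I *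
      (((t : ℝ) * (th ρ ν (φ - u / t) - th ρ ν φ) : ℝ) : ℂ))) atTop
      (𝓝 (Complex.exp (Complex.I * ((-(u * vf (ρ * rz ρ) (sin ν) φ) : ℝ) : ℂ)))) := by
    have hcont : Continuous (fun x : ℝ => Complex.exp (Complex.I * (x : ℂ))) := by fun_prop
    exact (hcont.tendsto _).comp hth
  have hx' : Tendsto (fun t : ℕ => Complex.exp (-(Complex.I *
      (((t : ℝ) * (th ρ ν (φ - u / t) - th ρ ν φ) : ℝ) : ℂ)))) atTop
      (𝓝 (Complex.exp (-(Complex.I * ((-(u * vf (ρ * rz ρ) (sin ν) φ) : ℝ) : ℂ))))) := by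
    have hcont : Continuous (fun x : ℝ => Complex.exp (-(Complex.I * (x : ℂ)))) := by fun_prop
    exact (hcont.tendsto _).comp hth
  have n1 : ∀ x, ‖lam ρ ν 1 x‖ = 1 := fun x => by
    rw [lam_one P, mul_comm, Complex.norm_exp_ofReal_mul_I]
  have n2 : ∀ x, ‖lam ρ ν (-1) x‖ = 1 := fun x => by
    rw [lam_neg P, norm_neg, ← mul_neg, mul_comm, ← Complex.ofReal_neg, Complex.norm_exp_ofReal_mul_I]
  have c1 : Tendsto (fun t : ℕ => ((starRingEnd ℂ) (lam ρ ν 1 φ) * lam ρ ν (-1) (φ - u / t)) ^ t *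
      ∑ j : Fin 2, (starRingEnd ℂ) (AA ρ ν α β 1 φ j) * AA ρ ν α β (-1) (φ - u / t) j) atTop (𝓝 0) := by
    have := (hin 1 (-1)).norm
    refine squeeze_zero_norm (fun t => ?_) (by simpa using this)
    rw [norm_mul, norm_pow, norm_mul, RCLike.norm_conj, n1, n2]
    simp
  have c2 : Tendsto (fun t : ℕ => ((starRingEnd ℂ) (lam ρ ν (-1) φ) * lam ρ ν 1 (φ - u / t)) ^ t *
      ∑ j : Fin 2, (starRingEnd ℂ) (AA ρ ν α β (-1) φ j) * AA ρ ν α β 1 (φ - u / t) j) atTop (𝓝 0) := by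
    have := (hin (-1) 1).norm
    refine squeeze_zero_norm (fun t => ?_) (by simpa using this)
    rw [norm_mul, norm_pow, norm_mul, RCLike.norm_conj, n1, n2]
    simp
  have key := (((hx.mul (hin 1 1)).add (hx'.mul (hin (-1) (-1)))).add c1).add c2
  have v1 : ((1 + 1 * 1 + (1 + 1) * (EE ρ ν α β φ / cn ρ ν φ)) / 4 : ℝ) = pp ρ ν α β 1 φ := by
    unfold pp; ring
  have v2 : ((1 + -1 * -1 + (-1 + -1) * (EE ρ ν α β φ / cn ρ ν φ)) / 4 : ℝ) = pp ρ ν α β (-1) φ := by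
    unfold pp; ring
  rw [v1, v2, add_zero, add_zero] at key
  refine key.congr fun t => ?_
  have l1 : ((starRingEnd ℂ) (lam ρ ν 1 φ) * lam ρ ν 1 (φ - u / t)) ^ t = Complex.exp (Complex.I *
      (((t : ℝ) * (th ρ ν (φ - u / t) - th ρ ν φ) : ℝ) : ℂ)) := by
    rw [lam_one P, lam_one P, ← Complex.exp_conj, ← Complex.exp_add, ← Complex.exp_nat_mul]
    congr 1
    simp only [map_mul, Complex.conj_I, Complex.conj_ofReal]
    push_cast
    ring
  have l2 : ((starRingEnd ℂ) (lam ρ ν (-1) φ) * lam ρ ν (-1) (φ - u / t)) ^ t = Complex.exp (-(Complex.I *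
      (((t : ℝ) * (th ρ ν (φ - u / t) - th ρ ν φ) : ℝ) : ℂ))) := by
    rw [lam_neg P, lam_neg P, map_neg, neg_mul_neg, ← Complex.exp_conj, ← Complex.exp_add, ← Complex.exp_nat_mul]
    congr 1
    simp only [map_mul, map_neg, Complex.conj_I, Complex.conj_ofReal]
    push_cast
    ring
  rw [← l1, ← l2]
  simp only [Fin.sum_univ_two, ft_eq hρ P, map_add, map_mul, map_pow, mul_pow]
  ring

lemma EE_cont (ρ ν : ℝ) (α β : ℂ) : Continuous (EE ρ ν α β) := by
  have h3 : Continuous (ww ρ ν) := by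
    unfold ww
    have := Complex.continuous_ofReal
    fun_prop
  unfold EE nn
  exact Continuous.add (by fun_prop) (continuous_const.mul (Complex.continuous_re.comp (by fun_prop)))

lemma pp_cont {h : ℝ} (P : Par (ρ * rz ρ) (sin ν) h) (α β : ℂ) (e : ℝ) : Continuous (pp ρ ν α β e) := by
  have h1 : Continuous (cn ρ ν) := by unfold cn; fun_prop
  have := (EE_cont ρ ν α β).div h1 (fun φ => (cn_pos P φ).ne')
  exact (continuous_const.add (continuous_const.mul this)).div_const 2

lemma vf_cont {q S h : ℝ} (P : Par q S h) : Continuous (vf q S) := by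
  unfold vf
  exact Continuous.div (by fun_prop) (by fun_prop) (fun φ => (Real.sqrt_pos.2 (P.gapφ φ)).ne')

lemma pp_sum {h : ℝ} (hρ : ρ ∈ Set.Ioo (0 : ℝ) 1) (P : Par (ρ * rz ρ) (sin ν) h) (α β : ℂ) (φ : ℝ) :
    pp ρ ν α β 1 φ + pp ρ ν α β (-1) (π - φ) = gam ρ ν α β (-vf (ρ * rz ρ) (sin ν) φ) ∧
    pp ρ ν α β (-1) φ + pp ρ ν α β 1 (π - φ) = gam ρ ν α β (vf (ρ * rz ρ) (sin ν) φ) := by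
  have hc := cn_pos P φ
  have a := EE_diff hρ P α β φ (-1)
  have b := EE_diff hρ P α β φ 1
  rw [neg_one_mul] at a
  rw [one_mul] at b
  rw [a, b]
  unfold pp
  rw [cn_symm]
  constructor
  · field_simp; ring
  · field_simp; ring

lemma int_lim {h : ℝ} (hρ : ρ ∈ Set.Ioo (0 : ℝ) 1) (P : Par (ρ * rz ρ) (sin ν) h) (α β : ℂ) (u : ℝ) :
    ∫ φ in (-(π / 2))..(3 * π / 2),
      (Complex.exp (Complex.I * ((-(u * vf (ρ * rz ρ) (sin ν) φ) : ℝ) : ℂ)) * pp ρ ν α β 1 φ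
        + Complex.exp (-(Complex.I * ((-(u * vf (ρ * rz ρ) (sin ν) φ) : ℝ) : ℂ))) * pp ρ ν α β (-1) φ)
    = ∫ φ in (-(π / 2))..(π / 2), ((gam ρ ν α β (vf (ρ * rz ρ) (sin ν) φ) : ℂ) *
        Complex.exp (u * (vf (ρ * rz ρ) (sin ν) φ : ℝ) * Complex.I)
        + (gam ρ ν α β (-vf (ρ * rz ρ) (sin ν) φ) : ℂ) *
        Complex.exp (u * ((-vf (ρ * rz ρ) (sin ν) φ : ℝ) : ℂ) * Complex.I)) := by
  have c1 := pp_cont P α β 1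
  have c2 := pp_cont P α β (-1)
  have c3 := vf_cont P
  set G : ℝ → ℂ := fun φ => (Complex.exp (Complex.I * ((-(u * vf (ρ * rz ρ) (sin ν) φ) : ℝ) : ℂ)) * pp ρ ν α β 1 φ
        + Complex.exp (-(Complex.I * ((-(u * vf (ρ * rz ρ) (sin ν) φ) : ℝ) : ℂ))) * pp ρ ν α β (-1) φ) with hG
  have cG : Continuous G := by
    have := Complex.continuous_ofReal
    rw [hG]; fun_prop
  rw [← intervalIntegral.integral_add_adjacent_intervals (b := π / 2) (cG.intervalIntegrable _ _)
    (cG.intervalIntegrable _ _)]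
  have e := intervalIntegral.integral_comp_sub_left (a := -(π / 2)) (b := π / 2) G π
  rw [show π - π / 2 = π / 2 by ring, show π - -(π / 2) = 3 * π / 2 by ring] at e
  have cG' : Continuous (fun x : ℝ => G (π - x)) := cG.comp (by fun_prop)
  rw [← e, ← intervalIntegral.integral_add (cG.intervalIntegrable _ _) (cG'.intervalIntegrable _ _)]
  refine intervalIntegral.integral_congr fun φ _ => ?_
  obtain ⟨s1, s2⟩ := pp_sum hρ P α β φ
  simp only [hG]
  rw [← s1, ← s2, vf_symm]
  push_cast
  have x1 : Complex.I * -(u * (vf (ρ * rz ρ) (sin ν) φ : ℂ)) = u * -(vf (ρ * rz ρ) (sin ν) φ : ℂ) * Complex.I := by ring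
  have x2 : -(u * -(vf (ρ * rz ρ) (sin ν) φ : ℂ) * Complex.I) = u * (vf (ρ * rz ρ) (sin ν) φ : ℂ) * Complex.I := by ring
  have x3 : Complex.I * -(u * -(vf (ρ * rz ρ) (sin ν) φ : ℂ)) = u * (vf (ρ * rz ρ) (sin ν) φ : ℂ) * Complex.I := by ring
  have x4 : -(u * (vf (ρ * rz ρ) (sin ν) φ : ℂ) * Complex.I) = u * -(vf (ρ * rz ρ) (sin ν) φ : ℂ) * Complex.I := by ring
  rw [x1, x2, x3, x4]
  ring

lemma char_lim (hρ : ρ ∈ Set.Ioo (0 : ℝ) 1) (P : Par (ρ * rz ρ) (sin ν) (hstar ρ ν)) (α β : ℂ)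
    (hαβ : ‖α‖ ^ 2 + ‖β‖ ^ 2 = 1) (u : ℝ) :
    Tendsto (fun t : ℕ => ∑ x ∈ Finset.Icc (-(t : ℤ)) t,
      Complex.exp (Complex.I * ((u / t : ℝ) : ℂ) * x) * (qprob ρ ν α β t x : ℂ)) atTop
      (𝓝 (∫ y, (dens ρ ν α β y : ℂ) * Complex.exp (u * y * Complex.I))) := by
  have hb : ∀ y : ℝ, ‖Complex.exp (u * y * Complex.I)‖ ≤ 1 := fun y => by
    rw [← Complex.ofReal_mul, Complex.norm_exp_ofReal_mul_I]
  rw [dens_F hρ P α β (fun y => Complex.exp (u * y * Complex.I)) (by fun_prop) hb, ← int_lim hρ P α β u]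
  have hpi : (π : ℂ) ≠ 0 := by exact_mod_cast Real.pi_ne_zero
  have e : ∀ t : ℕ, ∑ x ∈ Finset.Icc (-(t : ℤ)) t,
      Complex.exp (Complex.I * ((u / t : ℝ) : ℂ) * x) * (qprob ρ ν α β t x : ℂ)
      = 1 / (2 * π) * ∫ φ in (-(π / 2))..(3 * π / 2), ∑ j : Fin 2,
        (starRingEnd ℂ) (ft ρ ν α β (φ + ν) t j) * ft ρ ν α β (φ - u / t + ν) t j := by
    intro t
    rw [← charsum]
    field_simp
  simp_rw [e]
  refine Tendsto.const_mul _ ?_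
  refine intervalIntegral.tendsto_integral_filter_of_dominated_convergence (fun _ => 1) ?_ ?_
    intervalIntegrable_const ?_
  · refine Eventually.of_forall fun t => Continuous.aestronglyMeasurable ?_
    simp_rw [ft_sum]
    fun_prop
  · refine Eventually.of_forall fun t => ae_of_all _ fun φ _ => ?_
    exact ft_bound hρ α β hαβ φ (φ - u / t) t
  · exact ae_of_all _ fun φ _ => ptlim hρ P α β hαβ φ u

lemma gam_nonneg (hρ : ρ ∈ Set.Ioo (0 : ℝ) 1) (P : Par (ρ * rz ρ) (sin ν) (hstar ρ ν)) (α β : ℂ)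
    (hαβ : ‖α‖ ^ 2 + ‖β‖ ^ 2 = 1) {y : ℝ} (h0 : 0 < y) (h1 : y ≤ hstar ρ ν) :
    0 ≤ gam ρ ν α β y ∧ 0 ≤ gam ρ ν α β (-y) := by
  obtain ⟨φ, hφ⟩ := exists_vf P h0 h1
  obtain ⟨s1, s2⟩ := pp_sum hρ P α β φ
  have a1 : 0 ≤ gam ρ ν α β (-vf (ρ * rz ρ) (sin ν) φ) := by
    rw [← s1]
    exact add_nonneg (pp_nonneg hρ P α β hαβ _ _ (by norm_num)) (pp_nonneg hρ P α β hαβ _ _ (by norm_num))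
  have a2 : 0 ≤ gam ρ ν α β (vf (ρ * rz ρ) (sin ν) φ) := by
    rw [← s2]
    exact add_nonneg (pp_nonneg hρ P α β hαβ _ _ (by norm_num)) (pp_nonneg hρ P α β hαβ _ _ (by norm_num))
  obtain ⟨κ, hκ⟩ := gam_form ρ ν α β
  rw [hκ] at a1 a2 ⊢
  rw [hκ]
  constructor
  · rcases le_total 0 κ with h | h <;> nlinarith
  · rcases le_total 0 κ with h | h <;> nlinarith

lemma dens_nonneg (hρ : ρ ∈ Set.Ioo (0 : ℝ) 1) (P : Par (ρ * rz ρ) (sin ν) (hstar ρ ν)) (α β : ℂ)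
    (hαβ : ‖α‖ ^ 2 + ‖β‖ ^ 2 = 1) (y : ℝ) : 0 ≤ dens ρ ν α β y := by
  by_cases hy : y ∈ Set.Ioo (-(hstar ρ ν)) (hstar ρ ν)
  · rcases lt_trichotomy y 0 with h | h | h
    · have h0 : 0 < -y := by linarith
      have h1 : -y < hstar ρ ν := by linarith [hy.1]
      have e := (dens_eq hρ P α β h0 h1).2
      have g := (gam_nonneg hρ P α β hαβ h0 h1.le).2
      rw [neg_neg] at e g
      rw [e]
      have := GG_nonneg (ρ * rz ρ) (sin ν) (-y)
      have := Real.pi_pos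
      positivity
    · subst h
      have := Real.pi_pos
      unfold dens
      rw [if_pos hy]
      have : gam ρ ν α β 0 = 1 := by unfold gam; ring
      rw [this]
      norm_num
      positivity
    · rw [(dens_eq hρ P α β h hy.2).1]
      have := GG_nonneg (ρ * rz ρ) (sin ν) y
      have := (gam_nonneg hρ P α β hαβ h hy.2.le).1
      have := Real.pi_pos
      positivity
  · rw [dens_zero hy]

end Part5


section Final
variable {ρ ν : ℝ}

lemma qprob_nonneg (ρ ν : ℝ) (α β : ℂ) (t : ℕ) (x : ℤ) : 0 ≤ qprob ρ ν α β t x := by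
  unfold qprob; positivity

lemma qprob_sum (hρ : ρ ∈ Set.Ioo (0 : ℝ) 1) (α β : ℂ)
    (hαβ : ‖α‖ ^ 2 + ‖β‖ ^ 2 = 1) (t : ℕ) :
    ∑ x ∈ Finset.Icc (-(t : ℤ)) t, qprob ρ ν α β t x = 1 := by
  have e := charsum ρ ν α β t 0
  have f : ∀ φ : ℝ, ∑ j : Fin 2, (starRingEnd ℂ) (ft ρ ν α β (φ + ν) t j) *
      ft ρ ν α β (φ - 0 + ν) t j = 1 := by
    intro φ
    rw [sub_zero, Fin.sum_univ_two, Complex.conj_mul', Complex.conj_mul']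
    exact_mod_cast ft_norm (ν := ν) hρ α β hαβ φ t
  simp_rw [f] at e
  simp only [Complex.ofReal_zero, mul_zero, zero_mul, Complex.exp_zero, one_mul,
    intervalIntegral.integral_const] at e
  have e2 : 2 * π * ∑ x ∈ Finset.Icc (-(t : ℤ)) t, qprob ρ ν α β t x = 2 * π * 1 := by
    have : ((2 * π * ∑ x ∈ Finset.Icc (-(t : ℤ)) t, qprob ρ ν α β t x : ℝ) : ℂ)
        = ((2 * π * 1 : ℝ) : ℂ) := by
      push_cast
      rw [e]
      simp
      ring
    exact_mod_cast this
  exact mul_left_cancel₀ (by positivity) e2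

def walkLaw (ρ ν : ℝ) (α β : ℂ) (t : ℕ) : Measure ℝ :=
  ∑ x ∈ Finset.Icc (-(t : ℤ)) t, ENNReal.ofReal (qprob ρ ν α β t x) • Measure.dirac ((x : ℝ) / t)

lemma mt_prob (hρ : ρ ∈ Set.Ioo (0 : ℝ) 1) (α β : ℂ)
    (hαβ : ‖α‖ ^ 2 + ‖β‖ ^ 2 = 1) (t : ℕ) : IsProbabilityMeasure (walkLaw ρ ν α β t) := by
  constructor
  unfold walkLaw
  simp only [Measure.coe_finsetSum, Finset.sum_apply, Measure.smul_apply, measure_univ, smul_eq_mul,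
    mul_one]
  rw [← ENNReal.ofReal_sum_of_nonneg (fun _ _ => qprob_nonneg _ _ _ _ _ _), qprob_sum hρ α β hαβ]
  simp

lemma mt_char (α β : ℂ) (t : ℕ) (u : ℝ) : charFun (walkLaw ρ ν α β t) u =
    ∑ x ∈ Finset.Icc (-(t : ℤ)) t,
      Complex.exp (Complex.I * ((u / t : ℝ) : ℂ) * x) * (qprob ρ ν α β t x : ℂ) := by
  rw [charFun_apply_real]
  unfold walkLaw
  rw [integral_finsetSum_measure]
  · refine Finset.sum_congr rfl fun x _ => ?_
    rw [integral_smul_measure, integral_dirac, ENNReal.toReal_ofReal (qprob_nonneg _ _ _ _ _ _),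
      Complex.real_smul, mul_comm]
    congr 2
    push_cast
    ring
  · intro x _
    exact (integrable_dirac (by simp)).smul_measure ENNReal.ofReal_ne_top

lemma mt_Iic (α β : ℂ) (t : ℕ) (ht : 0 < t) (x : ℝ) : (walkLaw ρ ν α β t (Set.Iic x)).toReal =
    ∑' y : ℤ, if (y : ℝ) ≤ x * t then qprob ρ ν α β t y else 0 := by
  have ht' : (0 : ℝ) < t := by exact_mod_cast ht
  rw [tsum_eq_sum (s := Finset.Icc (-(t : ℤ)) t)]
  · unfold walkLaw
    simp only [Measure.coe_finsetSum, Finset.sum_apply, Measure.smul_apply, smul_eq_mul]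
    rw [ENNReal.toReal_sum]
    · refine Finset.sum_congr rfl fun y _ => ?_
      rw [Measure.dirac_apply' _ measurableSet_Iic, Set.indicator_apply]
      simp only [Set.mem_Iic, div_le_iff₀ ht']
      split_ifs
      · simp [qprob_nonneg]
      · simp
    · intro y _
      rw [Measure.dirac_apply' _ measurableSet_Iic, Set.indicator_apply]
      split_ifs <;> simp
  · intro y hy
    simp [qprob, qwalk_supp ρ ν α β t y hy]

def ml (ρ ν : ℝ) (α β : ℂ) : Measure ℝ :=
  volume.withDensity (fun y => ENNReal.ofReal (dens ρ ν α β y))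

lemma ml_char (hρ : ρ ∈ Set.Ioo (0 : ℝ) 1) (P : Par (ρ * rz ρ) (sin ν) (hstar ρ ν)) (α β : ℂ)
    (hαβ : ‖α‖ ^ 2 + ‖β‖ ^ 2 = 1) (u : ℝ) :
    charFun (ml ρ ν α β) u = ∫ y, (dens ρ ν α β y : ℂ) * Complex.exp (u * y * Complex.I) := by
  rw [charFun_apply_real]
  unfold ml
  rw [integral_withDensity_eq_integral_toReal_smul (dens_meas ρ ν α β).ennreal_ofReal
    (ae_of_all _ fun _ => ENNReal.ofReal_lt_top)]
  refine integral_congr_ae (ae_of_all _ fun y => ?_)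
  simp only
  rw [ENNReal.toReal_ofReal (dens_nonneg hρ P α β hαβ y), Complex.real_smul]

lemma dens_total (hρ : ρ ∈ Set.Ioo (0 : ℝ) 1) (P : Par (ρ * rz ρ) (sin ν) (hstar ρ ν)) (α β : ℂ)
    (hαβ : ‖α‖ ^ 2 + ‖β‖ ^ 2 = 1) : ∫ y, dens ρ ν α β y = 1 := by
  have h := char_lim hρ P α β hαβ 0
  have e : ∀ t : ℕ, ∑ x ∈ Finset.Icc (-(t : ℤ)) t,
      Complex.exp (Complex.I * ((0 / t : ℝ) : ℂ) * x) * (qprob ρ ν α β t x : ℂ) = 1 := by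
    intro t
    simp only [zero_div, Complex.ofReal_zero, mul_zero, zero_mul, Complex.exp_zero, one_mul]
    exact_mod_cast qprob_sum (ν := ν) hρ α β hαβ t
  simp_rw [e] at h
  have h2 := tendsto_nhds_unique h tendsto_const_nhds
  simp only [Complex.ofReal_zero, zero_mul, Complex.exp_zero, mul_one] at h2
  rw [integral_complex_ofReal] at h2
  exact_mod_cast h2

lemma ml_prob (hρ : ρ ∈ Set.Ioo (0 : ℝ) 1) (P : Par (ρ * rz ρ) (sin ν) (hstar ρ ν)) (α β : ℂ)
    (hαβ : ‖α‖ ^ 2 + ‖β‖ ^ 2 = 1) : IsProbabilityMeasure (ml ρ ν α β) := by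
  constructor
  unfold ml
  rw [withDensity_apply _ MeasurableSet.univ, Measure.restrict_univ,
    ← ofReal_integral_eq_lintegral_ofReal (dens_int hρ P α β)
      (ae_of_all _ (dens_nonneg hρ P α β hαβ)), dens_total hρ P α β hαβ]
  simp

lemma ml_Iic (hρ : ρ ∈ Set.Ioo (0 : ℝ) 1) (P : Par (ρ * rz ρ) (sin ν) (hstar ρ ν)) (α β : ℂ)
    (hαβ : ‖α‖ ^ 2 + ‖β‖ ^ 2 = 1) (x : ℝ) :
    (ml ρ ν α β (Set.Iic x)).toReal = ∫ y in Set.Iic x, dens ρ ν α β y := by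
  unfold ml
  rw [withDensity_apply _ measurableSet_Iic,
    ← ofReal_integral_eq_lintegral_ofReal (dens_int hρ P α β).restrict
      (ae_of_all _ (dens_nonneg hρ P α β hαβ)), ENNReal.toReal_ofReal]
  exact integral_nonneg (dens_nonneg hρ P α β hαβ)

lemma main_lim (hρ : ρ ∈ Set.Ioo (0 : ℝ) 1) (P : Par (ρ * rz ρ) (sin ν) (hstar ρ ν)) (α β : ℂ)
    (hαβ : ‖α‖ ^ 2 + ‖β‖ ^ 2 = 1) (x : ℝ) :
    Tendsto (fun t : ℕ => ∑' y : ℤ, if (y : ℝ) ≤ x * t then qprob ρ ν α β t y else 0)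
      atTop (𝓝 (∫ y in Set.Iic x, dens ρ ν α β y)) := by
  let M : ℕ → ProbabilityMeasure ℝ := fun t => ⟨walkLaw ρ ν α β t, mt_prob hρ α β hαβ t⟩
  let M0 : ProbabilityMeasure ℝ := ⟨ml ρ ν α β, ml_prob hρ P α β hαβ⟩
  have hM : Tendsto M atTop (𝓝 M0) := by
    rw [ProbabilityMeasure.tendsto_iff_tendsto_charFun]
    intro u
    change Tendsto (fun t => charFun (walkLaw ρ ν α β t) u) atTop (𝓝 (charFun (ml ρ ν α β) u))
    rw [ml_char hρ P α β hαβ]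
    simp_rw [mt_char]
    exact char_lim hρ P α β hαβ u
  have hf : (M0 : Measure ℝ) (frontier (Set.Iic x)) = 0 := by
    change ml ρ ν α β (frontier (Set.Iic x)) = 0
    rw [frontier_Iic]
    exact withDensity_absolutelyContinuous _ _ (by simp)
  have h := ProbabilityMeasure.tendsto_measure_of_null_frontier_of_tendsto' hM hf
  have h2 := (ENNReal.tendsto_toReal (measure_ne_top (M0 : Measure ℝ) (Set.Iic x))).comp h
  rw [← ml_Iic hρ P α β hαβ x]
  refine Tendsto.congr' ?_ h2
  filter_upwards [eventually_gt_atTop 0] with t ht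
  exact mt_Iic α β t ht x

end Final

/-- convergence in distribution of `X_t / t` to the density `f`. -/
theorem stmt0 (ρ ν : ℝ) (hρ : ρ ∈ Set.Ioo (0 : ℝ) 1)
    (hexc : ∀ n : ℤ, ¬(ρ = 1 / Real.sqrt 2 ∧ ν = π / 2 + n * π))
    (α β : ℂ) (hαβ : ‖α‖ ^ 2 + ‖β‖ ^ 2 = 1) (x : ℝ) :
    Tendsto (fun t : ℕ => ∑' y : ℤ, if (y : ℝ) ≤ x * t then qprob ρ ν α β t y else 0)
      atTop (𝓝 (∫ y in Set.Iic x, dens ρ ν α β y)) := by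
  exact main_lim hρ (par hρ hexc) α β hαβ x

end
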